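/- arXiv:2503.11463 — 12 statements merged into one kernel-verified Lean document; each statement's English description precedes it below -/
import Mathlib

section
/- Let n ≥ 1, let σ be a permutation of [n] = {1,…,n}, and let P : [n] → ℕ be a pile assignment. Then P sorts σ on queues if and only if for every s ∈ [n−1]: P(s+1) ≥ P(s) + 1 whenever σ(s+1) < σ(s), and P(s+1) ≥ P(s) whenever σ(s+1) > σ(s). -/
/-- `P` sorts `σ` on queues: for all `s, t ∈ [n]`,
`s < t` iff `(P s, σ s)` is lexicographically less than `(P t, σ t)`. -/
def SortsOnQueues (n : ℕ) (σ P : ℕ → ℕ) : Prop :=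
  ∀ s ∈ Finset.Icc 1 n, ∀ t ∈ Finset.Icc 1 n,
    (s < t ↔ P s < P t ∨ (P s = P t ∧ σ s < σ t))

/-!
`P` sorts `σ` exactly when `s ↦ (P s, σ s)` is strictly increasing for the lexicographic order,
and on an interval of labels strict monotonicity only has to be checked at consecutive labels.
There `σ s ≠ σ (s + 1)`, so the comparison of the positions decides whether a strict or a weak
inequality between the piles is required.
-/

theorem strictMonoOn_iff_forall_lt_iff_lt {α β : Type*} [LinearOrder α] [Preorder β]
    {f : α → β} {s : Set α} :
    StrictMonoOn f s ↔ ∀ a ∈ s, ∀ b ∈ s, (a < b ↔ f a < f b) :=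
  ⟨fun hf _ ha _ hb => (hf.lt_iff_lt ha hb).symm, fun h a ha b hb => (h a ha b hb).1⟩

theorem strictMonoOn_iff_forall_lt_succ {α β : Type*} [PartialOrder α] [SuccOrder α]
    [IsSuccArchimedean α] [Preorder β] {f : α → β} {s : Set α} (hs : s.OrdConnected) :
    StrictMonoOn f s ↔
      ∀ a, ¬IsMax a → a ∈ s → Order.succ a ∈ s → f a < f (Order.succ a) :=
  ⟨fun hf _ hmax ha hsucc => hf ha hsucc (Order.lt_succ_of_not_isMax hmax),
    strictMonoOn_of_lt_succ hs⟩

theorem toLex_lt_toLex_iff_of_ne {α β : Type*} [PartialOrder α] [LinearOrder β]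
    {a₁ a₂ : α} {b₁ b₂ : β} (hb : b₁ ≠ b₂) :
    toLex (a₁, b₁) < toLex (a₂, b₂) ↔ (b₂ < b₁ → a₁ < a₂) ∧ (b₁ < b₂ → a₁ ≤ a₂) := by
  rw [Prod.Lex.toLex_lt_toLex]
  rcases hb.lt_or_gt with hlt | hgt
  · simp [hlt, hlt.not_gt, le_iff_lt_or_eq]
  · simp [hgt, hgt.not_gt]

theorem sortsOnQueues_iff_strictMonoOn {n : ℕ} {σ P : ℕ → ℕ} :
    SortsOnQueues n σ P ↔ StrictMonoOn (fun s => toLex (P s, σ s)) (Set.Icc 1 n) := by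
  simp only [SortsOnQueues, strictMonoOn_iff_forall_lt_iff_lt, Prod.Lex.toLex_lt_toLex,
    Finset.mem_Icc, Set.mem_Icc]

theorem sortsOnQueues_iff_forall_toLex_lt_succ {n : ℕ} {σ P : ℕ → ℕ} :
    SortsOnQueues n σ P ↔
      ∀ s ∈ Finset.Icc 1 (n - 1), toLex (P s, σ s) < toLex (P (s + 1), σ (s + 1)) := by
  rw [sortsOnQueues_iff_strictMonoOn, strictMonoOn_iff_forall_lt_succ Set.ordConnected_Icc]
  have mem_iff (s : ℕ) : s ∈ Finset.Icc 1 (n - 1) ↔ s ∈ Set.Icc 1 n ∧ s + 1 ∈ Set.Icc 1 n := by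
    simp only [Finset.mem_Icc, Set.mem_Icc]
    omega
  simp only [mem_iff, Order.succ_eq_add_one, not_isMax, not_false_eq_true, true_imp_iff, and_imp]

theorem stmt_0_general (n : ℕ) (σ P : ℕ → ℕ)
    (hσ : ∀ s ∈ Finset.Icc 1 (n - 1), σ s ≠ σ (s + 1)) :
    SortsOnQueues n σ P ↔
      ∀ s ∈ Finset.Icc 1 (n - 1),
        (σ (s + 1) < σ s → P s + 1 ≤ P (s + 1)) ∧
        (σ s < σ (s + 1) → P s ≤ P (s + 1)) :=
  sortsOnQueues_iff_forall_toLex_lt_succ.trans <|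
    forall₂_congr fun s hs => toLex_lt_toLex_iff_of_ne (hσ s hs)

theorem stmt_0 (n : ℕ) (hn : 1 ≤ n) (σ : ℕ → ℕ)
    (hσ : Set.BijOn σ (Set.Icc 1 n) (Set.Icc 1 n)) (P : ℕ → ℕ) :
    SortsOnQueues n σ P ↔
      ∀ s ∈ Finset.Icc 1 (n - 1),
        (σ (s + 1) < σ s → P s + 1 ≤ P (s + 1)) ∧
        (σ s < σ (s + 1) → P s ≤ P (s + 1)) :=
  stmt_0_general n σ P fun s hs => by
    rw [Finset.mem_Icc] at hs
    exact hσ.injOn.ne ⟨hs.1, by omega⟩ ⟨by omega, by omega⟩ s.succ_ne_self.symm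
end

section
/- Let n ≥ 1, let σ be a permutation of [n], and suppose P : [n] → ℕ sorts σ on queues with P(1) = 1. Then the number of piles used satisfies P(n) ≥ 1 + desc(σ). -/
/-- The number of descents of `σ`, `|{s ∈ [n−1] : σ(s+1) < σ(s)}|`. -/
def descents (n : ℕ) (σ : ℕ → ℕ) : ℕ :=
  ((Finset.Icc 1 (n - 1)).filter (fun s => σ (s + 1) < σ s)).card

theorem add_sum_Ico_le_of_add_le_succ {M : Type*} [AddCommMonoid M] [Preorder M]
    [IsOrderedAddMonoid M] {f w : ℕ → M} {m n : ℕ} (hmn : m ≤ n)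
    (h : ∀ k ∈ Finset.Ico m n, f k + w k ≤ f (k + 1)) :
    f m + ∑ k ∈ Finset.Ico m n, w k ≤ f n := by
  induction n, hmn using Nat.le_induction with
  | base => simp
  | succ n hmn ih =>
    have h_init : f m + ∑ k ∈ Finset.Ico m n, w k ≤ f n :=
      ih fun k hk => h k (Finset.Ico_subset_Ico_right n.le_succ hk)
    have h_last : f n + w n ≤ f (n + 1) := h n (by simp [hmn])
    calc f m + ∑ k ∈ Finset.Ico m (n + 1), w k
        = f m + ∑ k ∈ Finset.Ico m n, w k + w n := by rw [Finset.sum_Ico_succ_top hmn, add_assoc]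
      _ ≤ f n + w n := by gcongr
      _ ≤ f (n + 1) := h_last

theorem descents_eq_sum_Ico (n : ℕ) (σ : ℕ → ℕ) :
    descents n σ = ∑ s ∈ Finset.Ico 1 n, if σ (s + 1) < σ s then 1 else 0 := by
  have h_range : Finset.Icc 1 (n - 1) = Finset.Ico 1 n := by
    ext s
    simp only [Finset.mem_Icc, Finset.mem_Ico]
    omega
  rw [descents, h_range, Finset.card_filter]

namespace SortsOnQueues

variable {n s t : ℕ} {σ P : ℕ → ℕ}

theorem monotoneOn (h : SortsOnQueues n σ P) : MonotoneOn P (Finset.Icc 1 n) := by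
  intro s hs t ht hst
  obtain rfl | hlt := hst.eq_or_lt
  · rfl
  · obtain hP | ⟨hP, -⟩ := (h s hs t ht).1 hlt
    exacts [hP.le, hP.le]

theorem pile_lt_pile_of_le (h : SortsOnQueues n σ P) (hs : s ∈ Finset.Icc 1 n)
    (ht : t ∈ Finset.Icc 1 n) (hst : s < t) (hσ : σ t ≤ σ s) : P s < P t :=
  ((h s hs t ht).1 hst).resolve_right fun hsame => hsame.2.not_ge hσ

theorem pile_add_descent_le_succ (h : SortsOnQueues n σ P) (hs : s ∈ Finset.Ico 1 n) :
    P s + (if σ (s + 1) < σ s then 1 else 0) ≤ P (s + 1) := by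
  obtain ⟨h1s, hsn⟩ := Finset.mem_Ico.1 hs
  have hs_mem : s ∈ Finset.Icc 1 n := Finset.mem_Icc.2 ⟨h1s, hsn.le⟩
  have hsucc_mem : s + 1 ∈ Finset.Icc 1 n := Finset.mem_Icc.2 ⟨s.succ_pos, hsn⟩
  split_ifs with hdesc
  · exact h.pile_lt_pile_of_le hs_mem hsucc_mem s.lt_succ_self hdesc.le
  · exact h.monotoneOn hs_mem hsucc_mem s.le_succ

end SortsOnQueues

theorem stmt_1_general {n : ℕ} (hn : 1 ≤ n) {σ P : ℕ → ℕ} (hsort : SortsOnQueues n σ P) :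
    P 1 + descents n σ ≤ P n := by
  rw [descents_eq_sum_Ico]
  exact add_sum_Ico_le_of_add_le_succ hn fun _ hs => hsort.pile_add_descent_le_succ hs

theorem stmt_1 (n : ℕ) (hn : 1 ≤ n) (σ : ℕ → ℕ)
    (hσ : Set.BijOn σ (Set.Icc 1 n) (Set.Icc 1 n)) (P : ℕ → ℕ)
    (hsort : SortsOnQueues n σ P) (hP1 : P 1 = 1) :
    1 + descents n σ ≤ P n := by
  simpa only [hP1] using stmt_1_general hn hsort
end

section
/- Let n ≥ 1, let σ be a permutation of [n], and let m ≥ 1. There exists a pile assignment P : [n] → [m] that sorts σ on queues if and only if ascruns(σ) ≤ m. -/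
/-- The number of ascending runs of `σ`, `1 + desc(σ)`. -/
def ascRuns (n : ℕ) (σ : ℕ → ℕ) : ℕ := 1 + descents n σ

theorem descents_mono (σ : ℕ → ℕ) : Monotone (descents · σ) := fun _ _ hst =>
  Finset.card_le_card <| Finset.filter_subset_filter _ <|
    Finset.Icc_subset_Icc_right (Nat.sub_le_sub_right hst 1)

theorem descents_succ {n : ℕ} (hn : 1 ≤ n) (σ : ℕ → ℕ) :
    descents (n + 1) σ = descents n σ + if σ (n + 1) < σ n then 1 else 0 := by
  obtain ⟨k, rfl⟩ := Nat.exists_eq_add_of_le' hn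
  simp only [descents, Finset.card_filter, Nat.add_sub_cancel,
    Finset.sum_Icc_succ_top (Nat.le_add_left 1 k)]

theorem sortsOnQueues_iff_forall_succ {n : ℕ} {σ P : ℕ → ℕ} :
    SortsOnQueues n σ P ↔ ∀ s, 1 ≤ s → s < n →
      P s < P (s + 1) ∨ (P s = P (s + 1) ∧ σ s < σ (s + 1)) := by
  rw [sortsOnQueues_iff_strictMonoOn]
  constructor
  · exact fun h s hs hsn => Prod.Lex.toLex_lt_toLex.1 <|
      h ⟨hs, hsn.le⟩ ⟨Nat.le_add_left 1 s, hsn⟩ s.lt_succ_self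
  · exact fun h => strictMonoOn_of_lt_add_one Set.ordConnected_Icc
      fun s _ hs hs' => Prod.Lex.toLex_lt_toLex.2 (h s hs.1 hs'.2)

theorem SortsOnQueues.add_descents_le {n : ℕ} {σ P : ℕ → ℕ} (hP : SortsOnQueues n σ P)
    (hn : 1 ≤ n) : P 1 + descents n σ ≤ P n := by
  rw [sortsOnQueues_iff_forall_succ] at hP
  induction n, hn using Nat.le_induction with
  | base => simp [descents]
  | succ n hn ih =>
    have hbound := ih fun s hs hsn => hP s hs (hsn.trans n.lt_succ_self)
    have hstep := hP n hn n.lt_succ_self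
    rw [descents_succ hn]
    split_ifs <;> omega

theorem sortsOnQueues_ascRuns {n : ℕ} {σ : ℕ → ℕ}
    (hσ : ∀ s, 1 ≤ s → s < n → σ s ≠ σ (s + 1)) :
    SortsOnQueues n σ (ascRuns · σ) := by
  refine sortsOnQueues_iff_forall_succ.2 fun s hs hsn => ?_
  have hne := hσ s hs hsn
  simp only [ascRuns, descents_succ hs]
  split_ifs <;> omega

theorem stmt_3_general {n : ℕ} (hn : 1 ≤ n) {σ : ℕ → ℕ}
    (hσ : ∀ s, 1 ≤ s → s < n → σ s ≠ σ (s + 1)) (m : ℕ) :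
    (∃ P : ℕ → ℕ, (∀ s ∈ Finset.Icc 1 n, P s ∈ Finset.Icc 1 m) ∧
      SortsOnQueues n σ P) ↔ ascRuns n σ ≤ m := by
  simp only [Finset.mem_Icc]
  constructor
  · rintro ⟨P, hPm, hP⟩
    calc ascRuns n σ ≤ P 1 + descents n σ := Nat.add_le_add_right (hPm 1 ⟨le_rfl, hn⟩).1 _
      _ ≤ P n := hP.add_descents_le hn
      _ ≤ m := (hPm n ⟨hn, le_rfl⟩).2
  · refine fun h => ⟨(ascRuns · σ), fun s hs => ⟨Nat.le_add_right 1 _, ?_⟩,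
      sortsOnQueues_ascRuns hσ⟩
    exact (Nat.add_le_add_left (descents_mono σ hs.2) 1).trans h

theorem stmt_3 (n : ℕ) (hn : 1 ≤ n) (σ : ℕ → ℕ)
    (hσ : Set.BijOn σ (Set.Icc 1 n) (Set.Icc 1 n)) (m : ℕ) (hm : 1 ≤ m) :
    (∃ P : ℕ → ℕ, (∀ s ∈ Finset.Icc 1 n, P s ∈ Finset.Icc 1 m) ∧
      SortsOnQueues n σ P) ↔ ascRuns n σ ≤ m :=
  stmt_3_general hn (fun s hs hsn => hσ.injOn.ne ⟨hs, hsn.le⟩ ⟨Nat.le_add_left 1 s, hsn⟩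
    s.lt_succ_self.ne) m
end

section
/- Let n ≥ 1, let σ be a permutation of [n], and suppose P : [n] → ℕ sorts σ on stacks with P(1) = 1. Then the number of piles used satisfies P(n) ≥ 1 + ascs(σ). -/
/-- `P` sorts `σ` on stacks: for all `s, t ∈ [n]`,
`s < t` iff `P s < P t`, or `P s = P t` and `σ s > σ t`. -/
def SortsOnStacks (n : ℕ) (σ P : ℕ → ℕ) : Prop :=
  ∀ s ∈ Finset.Icc 1 n, ∀ t ∈ Finset.Icc 1 n,
    (s < t ↔ P s < P t ∨ (P s = P t ∧ σ t < σ s))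

/-- The number of ascents of `σ`, `|{s ∈ [n−1] : σ(s+1) > σ(s)}|`. -/
def ascents (n : ℕ) (σ : ℕ → ℕ) : ℕ :=
  ((Finset.Icc 1 (n - 1)).filter (fun s => σ s < σ (s + 1))).card

/-! Cards of consecutive labels `s`, `s + 1` forming an ascent cannot share a pile, so the weakly
increasing `P` jumps at every ascent. A monotone function takes distinct values at the points where
it jumps, and on `[n - 1]` these values all lie in `[P 1, P n)`. -/

open Finset

theorem card_filter_lt_succ_le_card_Ico {α β : Type*} [LinearOrder α] [LocallyFiniteOrder α]
    [SuccOrder α] [Preorder β] [LocallyFiniteOrder β] [DecidableLT β] {f : α → β} {a b : α}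
    (hf : MonotoneOn f (Set.Icc a b)) :
    #{s ∈ Ico a b | f s < f (Order.succ s)} ≤ #(Ico (f a) (f b)) := by
  have mem_jumps {s : α} (hs : s ∈ ({s ∈ Ico a b | f s < f (Order.succ s)} : Finset α)) :
      (a ≤ s ∧ s < b) ∧ f s < f (Order.succ s) := by
    simpa only [mem_filter, mem_Ico] using hs
  refine card_le_card_of_injOn f (fun s hs => ?_) (StrictMonoOn.injOn fun s hs t ht hst => ?_)
  · obtain ⟨⟨has, hsb⟩, hjump⟩ := mem_jumps hs
    have hab : a ≤ b := has.trans hsb.le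
    have hlower : f a ≤ f s := hf (Set.left_mem_Icc.2 hab) ⟨has, hsb.le⟩ has
    have hupper : f (Order.succ s) ≤ f b :=
      hf ⟨has.trans (Order.le_succ s), Order.succ_le_of_lt hsb⟩ (Set.right_mem_Icc.2 hab)
        (Order.succ_le_of_lt hsb)
    exact mem_coe.2 (mem_Ico.2 ⟨hlower, hjump.trans_le hupper⟩)
  · obtain ⟨⟨has, hsb⟩, hjump⟩ := mem_jumps hs
    obtain ⟨⟨hat, htb⟩, -⟩ := mem_jumps ht
    calc
      f s < f (Order.succ s) := hjump
      _ ≤ f t := hf ⟨has.trans (Order.le_succ s), Order.succ_le_of_lt hsb⟩ ⟨hat, htb.le⟩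
        (Order.succ_le_of_lt hst)

namespace SortsOnStacks

variable {n : ℕ} {σ P : ℕ → ℕ}

theorem monotoneOn (h : SortsOnStacks n σ P) : MonotoneOn P (Set.Icc 1 n) := by
  intro s hs t ht hst
  obtain rfl | hlt := hst.eq_or_lt
  · rfl
  · obtain hP | ⟨hP, -⟩ := (h s (mem_Icc.2 hs) t (mem_Icc.2 ht)).1 hlt
    exacts [hP.le, hP.le]

theorem pile_lt_of_position_lt (h : SortsOnStacks n σ P) {s t : ℕ} (hs : s ∈ Icc 1 n)
    (ht : t ∈ Icc 1 n) (hst : s < t) (hσ : σ s < σ t) : P s < P t :=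
  ((h s hs t ht).1 hst).resolve_right fun hdesc => hσ.not_gt hdesc.2

theorem ascents_le_card_filter_lt_succ (h : SortsOnStacks n σ P) :
    ascents n σ ≤ #{s ∈ Ico 1 n | P s < P (s + 1)} := by
  refine card_le_card fun s hs => ?_
  obtain ⟨hs_mem, hasc⟩ := mem_filter.1 hs
  obtain ⟨hs_one, hs_le⟩ := mem_Icc.1 hs_mem
  refine mem_filter.2 ⟨mem_Ico.2 ⟨hs_one, by lia⟩, ?_⟩
  exact h.pile_lt_of_position_lt (mem_Icc.2 (by lia)) (mem_Icc.2 (by lia)) s.lt_succ_self hasc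

end SortsOnStacks

theorem stmt_5_general (n : ℕ) (hn : 1 ≤ n) (σ P : ℕ → ℕ) (hsort : SortsOnStacks n σ P) :
    P 1 + ascents n σ ≤ P n := by
  have hmono : MonotoneOn P (Set.Icc 1 n) := hsort.monotoneOn
  have hP : P 1 ≤ P n := hmono (Set.left_mem_Icc.2 hn) (Set.right_mem_Icc.2 hn) hn
  have hascents : ascents n σ ≤ P n - P 1 :=
    calc
      ascents n σ ≤ #{s ∈ Ico 1 n | P s < P (s + 1)} := hsort.ascents_le_card_filter_lt_succ
      _ ≤ #(Ico (P 1) (P n)) := card_filter_lt_succ_le_card_Ico hmono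
      _ = P n - P 1 := Nat.card_Ico _ _
  lia

theorem stmt_5 (n : ℕ) (hn : 1 ≤ n) (σ : ℕ → ℕ)
    (hσ : Set.BijOn σ (Set.Icc 1 n) (Set.Icc 1 n)) (P : ℕ → ℕ)
    (hsort : SortsOnStacks n σ P) (hP1 : P 1 = 1) :
    1 + ascents n σ ≤ P n := by
  simpa only [hP1] using stmt_5_general n hn σ P hsort
end

section
/- Let n ≥ 1 and let σ be a permutation of [n]. Define the cumulative descending runs function P*(s) = 1 + |{s' ∈ [s−1] : σ(s'+1) > σ(s')}| for s ∈ [n]. Then P* sorts σ on stacks, P*(1) = 1, P*(n) = 1 + ascs(σ), and P* is minimal: every P that sorts σ on stacks with P(1) = 1 satisfies P(n) ≥ P*(n). -/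
/-- The cumulative descending runs function
`P*(s) = 1 + |{s' ∈ [s−1] : σ(s'+1) > σ(s')}|`. -/
def cumDescRuns (σ : ℕ → ℕ) (s : ℕ) : ℕ :=
  1 + ((Finset.Icc 1 (s - 1)).filter (fun s' => σ s' < σ (s' + 1))).card

/-! Sorting on stacks means being strictly increasing for the lexicographic order that compares
piles first and, within a pile, positions in reverse. Like any strict monotonicity on an interval
of `ℕ`, this only has to be tested on consecutive cards, where it says that `P` weakly increases,
and strictly so unless `σ` has a descent. As `P*` increases by exactly one at each ascent and is
constant elsewhere, it passes this test and grows no faster than any other sorting assignment. -/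

section

variable {n : ℕ} {σ P : ℕ → ℕ}

/-- The place of card `s` in the deck rebuilt from the piles: first its pile, then its place within
the pile. The second component lies in the order dual since a stack reverses the order of its
cards. -/
def stackKey (σ P : ℕ → ℕ) (s : ℕ) : ℕ ×ₗ ℕᵒᵈ :=
  toLex (P s, OrderDual.toDual (σ s))

theorem stackKey_lt_stackKey_iff {s t : ℕ} :
    stackKey σ P s < stackKey σ P t ↔ P s < P t ∨ (P s = P t ∧ σ t < σ s) :=
  Prod.Lex.toLex_lt_toLex

theorem sortsOnStacks_iff_strictMonoOn_stackKey :
    SortsOnStacks n σ P ↔ StrictMonoOn (stackKey σ P) (Set.Icc 1 n) := by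
  simp only [SortsOnStacks, Finset.mem_Icc, ← stackKey_lt_stackKey_iff]
  exact ⟨fun h s hs t ht => (h s hs t ht).1, fun h s hs t ht => (h.lt_iff_lt hs ht).symm⟩

theorem sortsOnStacks_iff_forall_succ :
    SortsOnStacks n σ P ↔
      ∀ s ∈ Set.Ico 1 n, P s < P (s + 1) ∨ (P s = P (s + 1) ∧ σ (s + 1) < σ s) := by
  simp only [sortsOnStacks_iff_strictMonoOn_stackKey, ← stackKey_lt_stackKey_iff]
  constructor
  · intro h s hs
    exact h ⟨hs.1, hs.2.le⟩ ⟨s.succ_pos, hs.2⟩ s.lt_succ_self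
  · intro h
    exact strictMonoOn_of_lt_add_one Set.ordConnected_Icc fun s _ hs hs' => h s ⟨hs.1, hs'.2⟩

theorem cumDescRuns_succ {s : ℕ} (hs : 1 ≤ s) :
    cumDescRuns σ (s + 1) = cumDescRuns σ s + if σ s < σ (s + 1) then 1 else 0 := by
  obtain ⟨k, rfl⟩ := Nat.exists_eq_add_of_le' hs
  simp only [cumDescRuns, Finset.card_filter, Nat.add_sub_cancel]
  rw [Finset.sum_Icc_succ_top k.succ_pos, ← add_assoc]

theorem sortsOnStacks_cumDescRuns_iff :
    SortsOnStacks n σ (cumDescRuns σ) ↔ ∀ s ∈ Set.Ico 1 n, σ s ≠ σ (s + 1) := by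
  rw [sortsOnStacks_iff_forall_succ]
  refine forall₂_congr fun s hs => ?_
  rw [cumDescRuns_succ hs.1]
  split_ifs <;> omega

theorem SortsOnStacks.add_cumDescRuns_le (hP : SortsOnStacks n σ P) {s : ℕ}
    (hs : s ∈ Set.Icc 1 n) : P 1 + cumDescRuns σ s ≤ P s + 1 := by
  obtain ⟨one_le, le_n⟩ := hs
  induction s, one_le using Nat.le_induction with
  | base => rfl
  | succ s one_le ih =>
    have before_s := ih (by omega)
    have step := sortsOnStacks_iff_forall_succ.1 hP s ⟨one_le, le_n⟩
    rw [cumDescRuns_succ one_le]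
    split_ifs <;> omega

end

theorem stmt_6_general (n : ℕ) (σ : ℕ → ℕ) (hσ : ∀ s ∈ Set.Ico 1 n, σ s ≠ σ (s + 1)) :
    SortsOnStacks n σ (cumDescRuns σ) ∧
    cumDescRuns σ 1 = 1 ∧
    cumDescRuns σ n = 1 + ascents n σ ∧
    ∀ P : ℕ → ℕ, SortsOnStacks n σ P →
      ∀ s ∈ Set.Icc 1 n, P 1 + cumDescRuns σ s ≤ P s + 1 :=
  ⟨sortsOnStacks_cumDescRuns_iff.2 hσ, rfl, rfl, fun _ hP _ hs => hP.add_cumDescRuns_le hs⟩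

theorem stmt_6 (n : ℕ) (hn : 1 ≤ n) (σ : ℕ → ℕ)
    (hσ : Set.BijOn σ (Set.Icc 1 n) (Set.Icc 1 n)) :
    SortsOnStacks n σ (cumDescRuns σ) ∧
    cumDescRuns σ 1 = 1 ∧
    cumDescRuns σ n = 1 + ascents n σ ∧
    ∀ P : ℕ → ℕ, SortsOnStacks n σ P → P 1 = 1 → cumDescRuns σ n ≤ P n := by
  obtain ⟨sorts, first, last, minimal⟩ := stmt_6_general n σ fun s hs =>
    hσ.injOn.ne ⟨hs.1, hs.2.le⟩ ⟨s.succ_pos, hs.2⟩ s.succ_ne_self.symm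
  exact ⟨sorts, first, last, fun P hP hP1 => by have := minimal P hP n ⟨hn, le_rfl⟩; omega⟩
end

section
/- Let n ≥ 1, let σ be a permutation of [n], let x : ℕ → {0,1} be a type indicator, and let P : [n] → ℕ be a pile assignment. Then (x, P) sorts σ if and only if for every s ∈ [n−1]: if x(P(s)) = 0 then P(s+1) ≥ P(s) + 1 when σ(s+1) < σ(s) and P(s+1) ≥ P(s) when σ(s+1) > σ(s); and if x(P(s)) = 1 then P(s+1) ≥ P(s) + 1 when σ(s+1) > σ(s) and P(s+1) ≥ P(s) when σ(s+1) < σ(s). -/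
/-!
Collecting the piles in order, queues forwards and stacks backwards, arranges the cards by
increasing `deckKey`, a key in a linear order: first the pile, then the position, reversed in a
stack. Sorting means that this key is strictly increasing on `[n]`, which can be tested on
consecutive labels. There the positions differ, so the comparison of keys says that the pile number
must increase exactly when the order within the pile `P s` would be wrong, and must not decrease
otherwise.
-/

/-- The heterogeneous shuffle `(x, P)` sorts `σ`: for all `s, t ∈ [n]`,
`s < t` iff `P s < P t`, or `P s = P t` and (`σ s < σ t` when pile `P s` is a
queue (`x (P s) = 0`), respectively `σ s > σ t` when it is a stack (`x (P s) = 1`)). -/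
def HeteroSorts (n : ℕ) (x : ℕ → Fin 2) (σ P : ℕ → ℕ) : Prop :=
  ∀ s ∈ Finset.Icc 1 n, ∀ t ∈ Finset.Icc 1 n,
    (s < t ↔ P s < P t ∨ (P s = P t ∧
      (if x (P s) = 0 then σ s < σ t else σ t < σ s)))

section StrictMonoOn

variable {α β : Type*} [PartialOrder α] [Add α] [One α] [SuccAddOrder α] [IsSuccArchimedean α]
  [NoMaxOrder α] [Preorder β] {s : Set α} {f : α → β}

lemma strictMonoOn_iff_forall_lt_add_one (hs : s.OrdConnected) :
    StrictMonoOn f s ↔ ∀ a ∈ s, a + 1 ∈ s → f a < f (a + 1) :=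
  ⟨fun hf _ ha ha' ↦ hf ha ha' (Order.add_one_le_iff.1 le_rfl),
    fun hf ↦ strictMonoOn_of_lt_add_one hs fun a _ ↦ hf a⟩

end StrictMonoOn

section DeckKey

open OrderDual

variable {κ ι α : Type*} (x : ι → Fin 2) (σ : κ → α) (P : κ → ι)

/-- The lexicographic rank of the card `s` in the deck collected from the piles: the pile `P s`
first, then the position `σ s`, in reverse order if the pile is a stack. The sum `α ⊕ₗ αᵒᵈ` only
serves to accommodate both orders in one type: cards from the same pile lie in the same summand. -/
def deckKey (s : κ) : ι ×ₗ (α ⊕ₗ αᵒᵈ) :=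
  toLex (P s, if x (P s) = 0 then Sum.inlₗ (σ s) else Sum.inrₗ (toDual (σ s)))

variable {x σ P} {s t : κ}

lemma deckKey_lt_deckKey [LT ι] [LT α] :
    deckKey x σ P s < deckKey x σ P t ↔
      P s < P t ∨ (P s = P t ∧ if x (P s) = 0 then σ s < σ t else σ t < σ s) := by
  refine Prod.Lex.toLex_lt_toLex.trans (or_congr_right (and_congr_right fun hP ↦ ?_))
  dsimp only at hP ⊢
  rw [← hP]
  split_ifs
  · exact Sum.Lex.inl_lt_inl_iff
  · exact Sum.Lex.inr_lt_inr_iff.trans toDual_lt_toDual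

lemma deckKey_lt_deckKey_of_ne [PartialOrder ι] [LinearOrder α] (hne : σ s ≠ σ t) :
    deckKey x σ P s < deckKey x σ P t ↔
      (x (P s) = 0 → (σ t < σ s → P s < P t) ∧ (σ s < σ t → P s ≤ P t)) ∧
      (x (P s) = 1 → (σ s < σ t → P s < P t) ∧ (σ t < σ s → P s ≤ P t)) := by
  rw [deckKey_lt_deckKey]
  have htype : x (P s) = 0 ∨ x (P s) = 1 := by omega
  rcases htype with hqueue | hstack <;> rcases hne.lt_or_gt with hlt | hgt <;>
    simp [*, not_lt_of_gt, le_iff_lt_or_eq]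

end DeckKey

section HeteroSorts

variable {n : ℕ} {x : ℕ → Fin 2} {σ P : ℕ → ℕ}

lemma heteroSorts_iff_strictMonoOn_deckKey :
    HeteroSorts n x σ P ↔ StrictMonoOn (deckKey x σ P) (Set.Icc 1 n) := by
  simp only [HeteroSorts, ← deckKey_lt_deckKey, Finset.mem_Icc]
  exact ⟨fun h s hs t ht hst ↦ (h s hs t ht).1 hst, fun h s hs t ht ↦ (h.lt_iff_lt hs ht).symm⟩

lemma heteroSorts_iff_forall_deckKey_lt_add_one :
    HeteroSorts n x σ P ↔
      ∀ s ∈ Finset.Icc 1 (n - 1), deckKey x σ P s < deckKey x σ P (s + 1) := by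
  rw [heteroSorts_iff_strictMonoOn_deckKey, strictMonoOn_iff_forall_lt_add_one Set.ordConnected_Icc]
  refine forall_congr' fun s ↦ ?_
  rw [← and_imp]
  have hmem : s ∈ Set.Icc 1 n ∧ s + 1 ∈ Set.Icc 1 n ↔ s ∈ Finset.Icc 1 (n - 1) := by
    simp only [Set.mem_Icc, Finset.mem_Icc]
    omega
  rw [hmem]

theorem stmt_8_general (hσ : ∀ s ∈ Finset.Icc 1 (n - 1), σ s ≠ σ (s + 1)) :
    HeteroSorts n x σ P ↔
      ∀ s ∈ Finset.Icc 1 (n - 1),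
        (x (P s) = 0 →
          (σ (s + 1) < σ s → P s + 1 ≤ P (s + 1)) ∧
          (σ s < σ (s + 1) → P s ≤ P (s + 1))) ∧
        (x (P s) = 1 →
          (σ s < σ (s + 1) → P s + 1 ≤ P (s + 1)) ∧
          (σ (s + 1) < σ s → P s ≤ P (s + 1))) := by
  simp only [Order.add_one_le_iff]
  exact heteroSorts_iff_forall_deckKey_lt_add_one.trans
    (forall₂_congr fun s hs ↦ deckKey_lt_deckKey_of_ne (hσ s hs))

end HeteroSorts

theorem stmt_8 (n : ℕ) (hn : 1 ≤ n) (σ : ℕ → ℕ)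
    (hσ : Set.BijOn σ (Set.Icc 1 n) (Set.Icc 1 n))
    (x : ℕ → Fin 2) (P : ℕ → ℕ) :
    HeteroSorts n x σ P ↔
      ∀ s ∈ Finset.Icc 1 (n - 1),
        (x (P s) = 0 →
          (σ (s + 1) < σ s → P s + 1 ≤ P (s + 1)) ∧
          (σ s < σ (s + 1) → P s ≤ P (s + 1))) ∧
        (x (P s) = 1 →
          (σ s < σ (s + 1) → P s + 1 ≤ P (s + 1)) ∧
          (σ (s + 1) < σ s → P s ≤ P (s + 1))) := by
  refine stmt_8_general fun s hs hss ↦ ?_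
  rw [Finset.mem_Icc] at hs
  exact s.succ_ne_self (hσ.injOn ⟨hs.1, by omega⟩ ⟨by omega, by omega⟩ hss).symm
end

section
/- Let n ≥ 1, let σ be a permutation of [n], and let x : ℕ → {0,1} be a type indicator. Define P* : [n] → ℕ recursively by P*(1) = 1, and for s ∈ [n−1]: P*(s+1) = P*(s) + 1 if either (x(P*(s)) = 0 and σ(s+1) < σ(s)) or (x(P*(s)) = 1 and σ(s+1) > σ(s)), and P*(s+1) = P*(s) otherwise. Then for every pile assignment P : [n] → ℕ such that (x, P) sorts σ and P(1) = 1, we have P(s) ≥ P*(s) for all s ∈ [n]. -/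
/-!
Only consecutive cards matter. By induction `Pstar s ≤ P s`, and a sorting assignment never puts
card `s + 1` in an earlier pile than card `s`, so the bound can only be lost if
`Pstar s = P s = P (s + 1)` while `Pstar` moves on to the next pile. But `Pstar` moves on exactly
when cards `s` and `s + 1` leave the pile `Pstar s` in the wrong order, and then a sorting
assignment cannot put both of them there.
-/

section Pile

variable {α : Type*}

/-- The order in which a pile of the given type (`0` for a queue, `1` for a stack) releases its
cards: the card at deck position `a` leaves the pile before the card at position `b`. -/
def PileLT [LT α] (type : Fin 2) (a b : α) : Prop :=
  if type = 0 then a < b else b < a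

theorem pileLT_iff [LT α] {type : Fin 2} {a b : α} :
    PileLT type a b ↔ type = 0 ∧ a < b ∨ type = 1 ∧ b < a := by
  fin_cases type <;> simp [PileLT]

theorem PileLT.asymm [Preorder α] {type : Fin 2} {a b : α} (hab : PileLT type a b) :
    ¬ PileLT type b a := by
  unfold PileLT at *
  split_ifs at * <;> exact lt_asymm hab

/-- The greedy choice of a pile for the next card: when the previous card, at deck position `a`,
is in pile `p`, the next card, at position `b`, joins it unless it would be released first, in
which case it starts pile `p + 1`. The condition is `PileLT (x p) b a`, spelled out as in the
recursion for `P*`. -/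
def greedyNext [LT α] [DecidableLT α] (x : ℕ → Fin 2) (p : ℕ) (a b : α) : ℕ :=
  if x p = 0 ∧ b < a ∨ x p = 1 ∧ a < b then p + 1 else p

variable [Preorder α] [DecidableLT α] {x : ℕ → Fin 2}

theorem greedyNext_le {p q r : ℕ} {a b : α} (hpq : p ≤ q)
    (hqr : q < r ∨ q = r ∧ PileLT (x q) a b) : greedyNext x p a b ≤ r := by
  unfold greedyNext
  rcases hqr with hlt | ⟨rfl, hab⟩
  · split_ifs <;> omega
  · split_ifs with hcond
    · have hba : PileLT (x p) b a := pileLT_iff.mpr hcond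
      have hne : p ≠ q := by
        rintro rfl
        exact hab.asymm hba
      exact hpq.lt_of_ne hne
    · exact hpq

theorem stmt_9_general {n : ℕ} {σ : ℕ → α} {Pstar P : ℕ → ℕ} (hone : Pstar 1 ≤ P 1)
    (hPstar : ∀ s ∈ Finset.Ico 1 n, Pstar (s + 1) = greedyNext x (Pstar s) (σ s) (σ (s + 1)))
    (hP : ∀ s ∈ Finset.Ico 1 n,
      P s < P (s + 1) ∨ P s = P (s + 1) ∧ PileLT (x (P s)) (σ s) (σ (s + 1))) :
    ∀ s ∈ Finset.Icc 1 n, Pstar s ≤ P s := by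
  intro s hs
  obtain ⟨hs_pos, hs_le⟩ := Finset.mem_Icc.mp hs
  clear hs
  induction s, hs_pos using Nat.le_induction with
  | base => exact hone
  | succ s hs_pos ih =>
    have hs : s ∈ Finset.Ico 1 n := Finset.mem_Ico.mpr ⟨hs_pos, hs_le⟩
    rw [hPstar s hs]
    exact greedyNext_le (ih (Nat.le_of_succ_le hs_le)) (hP s hs)

end Pile

theorem HeteroSorts.lt_or_eq_and_pileLT {n : ℕ} {x : ℕ → Fin 2} {σ P : ℕ → ℕ}
    (hP : HeteroSorts n x σ P) {s t : ℕ} (hs : 1 ≤ s) (hst : s < t) (ht : t ≤ n) :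
    P s < P t ∨ P s = P t ∧ PileLT (x (P s)) (σ s) (σ t) :=
  (hP s (Finset.mem_Icc.mpr ⟨hs, hst.le.trans ht⟩)
    t (Finset.mem_Icc.mpr ⟨hs.trans hst.le, ht⟩)).mp hst

theorem stmt_9 (n : ℕ) (hn : 1 ≤ n) (σ : ℕ → ℕ)
    (hσ : Set.BijOn σ (Set.Icc 1 n) (Set.Icc 1 n))
    (x : ℕ → Fin 2) (Pstar : ℕ → ℕ)
    (hPstar1 : Pstar 1 = 1)
    (hPstarRec : ∀ s ∈ Finset.Icc 1 (n - 1),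
      Pstar (s + 1) =
        if (x (Pstar s) = 0 ∧ σ (s + 1) < σ s) ∨
           (x (Pstar s) = 1 ∧ σ s < σ (s + 1)) then
          Pstar s + 1
        else Pstar s) :
    ∀ P : ℕ → ℕ, HeteroSorts n x σ P → P 1 = 1 →
      ∀ s ∈ Finset.Icc 1 n, Pstar s ≤ P s := by
  intro P hP hP1
  rw [Finset.Icc_sub_one_right_eq_Ico_of_not_isMin (not_isMin_of_lt hn)] at hPstarRec
  refine stmt_9_general (hPstar1.trans hP1.symm).le hPstarRec fun s hs => ?_
  obtain ⟨hs_pos, hs_lt⟩ := Finset.mem_Ico.mp hs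
  exact hP.lt_or_eq_and_pileLT hs_pos s.lt_succ_self hs_lt
end

section
/- Let n ≥ 1, let σ be a permutation of [n], and let x : ℕ → {0,1} be a type indicator. Define P* : [n] → ℕ recursively by P*(1) = 1, and for s ∈ [n−1]: P*(s+1) = P*(s) + 1 if either (x(P*(s)) = 0 and σ(s+1) < σ(s)) or (x(P*(s)) = 1 and σ(s+1) > σ(s)), and P*(s+1) = P*(s) otherwise. Then (x, P*) sorts σ, and P* uses the minimum number of piles among all sorts of σ on x: every P with (x, P) sorting σ and P(1) = 1 satisfies P(n) ≥ P*(n). -/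
open Set

section StrictOrder

variable {ι : Type*} [LinearOrder ι] [SuccOrder ι] [IsSuccArchimedean ι]

theorem lt_iff_of_rel_succ (R : ι → ι → Prop) [IsStrictOrder ι R] {a b s t : ι}
    (hsucc : ∀ i ∈ Ico a b, R i (Order.succ i)) (hs : s ∈ Icc a b) (ht : t ∈ Icc a b) :
    s < t ↔ R s t := by
  have rel_of_lt {u v : ι} (hu : a ≤ u) (hv : v ≤ b) (huv : u < v) : R u v := by
    rw [← Relation.transGen_eq_self (r := R)]
    exact transGen_of_succ_of_lt R
      (fun i hi => hsucc i ⟨hu.trans hi.1, hi.2.trans_le hv⟩) huv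
  refine ⟨rel_of_lt hs.1 ht.2, fun hst => ?_⟩
  rcases lt_trichotomy s t with hlt | rfl | hgt
  · exact hlt
  · exact absurd hst (irrefl s)
  · exact absurd hst (asymm (rel_of_lt ht.1 hs.2 hgt))

end StrictOrder

section Shuffle

variable {κ ι α : Type*}

/-- The dealing order of a shuffle: card `s` comes out before card `t`. Piles are emptied in
increasing order, and `r i` is the order in which pile `i` emits the positions it contains. -/
def Precedes [LT ι] (r : ι → α → α → Prop) (σ : κ → α) (P : κ → ι) : κ → κ → Prop :=
  (fun s => (⟨P s, σ s⟩ : Σ _ : ι, α)) ⁻¹'o Sigma.Lex (· < ·) r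

instance [Preorder ι] (r : ι → α → α → Prop) [∀ i, IsStrictOrder α (r i)] (σ : κ → α)
    (P : κ → ι) : IsStrictOrder κ (Precedes r σ P) :=
  have : IsStrictOrder (Σ _ : ι, α) (Sigma.Lex (· < ·) r) := {}
  inferInstanceAs (IsStrictOrder κ (_ ⁻¹'o _))

theorem precedes_iff [LT ι] {r : ι → α → α → Prop} {σ : κ → α} {P : κ → ι} {s t : κ} :
    Precedes r σ P s t ↔ P s < P t ∨ P s = P t ∧ r (P s) (σ s) (σ t) := by
  simp only [Precedes, Order.Preimage, Sigma.lex_iff]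
  grind

/-- The shuffle with pile assignment `P` sorts the cards `1, …, n` at positions `σ`: its dealing
order is the order of the labels. For queues and stacks this is `HeteroSorts`. -/
def SortsPiles [LT ι] (r : ι → α → α → Prop) (σ : ℕ → α) (n : ℕ) (P : ℕ → ι) : Prop :=
  ∀ s ∈ Icc 1 n, ∀ t ∈ Icc 1 n, (s < t ↔ Precedes r σ P s t)

theorem sortsPiles_of_precedes_succ [Preorder ι] {r : ι → α → α → Prop}
    [∀ i, IsStrictOrder α (r i)] {σ : ℕ → α} {n : ℕ} {P : ℕ → ι}
    (h : ∀ s ∈ Ico 1 n, Precedes r σ P s (s + 1)) : SortsPiles r σ n P :=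
  fun _ hs _ ht => lt_iff_of_rel_succ _ h hs ht

theorem SortsPiles.precedes_succ [LT ι] {r : ι → α → α → Prop} {σ : ℕ → α} {n : ℕ} {P : ℕ → ι}
    (h : SortsPiles r σ n P) {s : ℕ} (hs : s ∈ Ico 1 n) : Precedes r σ P s (s + 1) :=
  (h s ⟨hs.1, hs.2.le⟩ (s + 1) ⟨Nat.le_add_left 1 s, hs.2⟩).1 s.lt_succ_self

end Shuffle

section Greedy

variable {α : Type*} {r : ℕ → α → α → Prop} {σ : ℕ → α} {n : ℕ} {P Q : ℕ → ℕ}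

open Classical in
/-- The greedy pile assignment on the cards `1, …, n`: a card stays in the pile of its predecessor
if that pile emits the two in the right order, and otherwise opens the next pile. The first pile is
left free. -/
def IsGreedy (r : ℕ → α → α → Prop) (σ : ℕ → α) (n : ℕ) (P : ℕ → ℕ) : Prop :=
  ∀ s ∈ Ico 1 n, P (s + 1) = if r (P s) (σ s) (σ (s + 1)) then P s else P s + 1

theorem IsGreedy.precedes_succ (hP : IsGreedy r σ n P) {s : ℕ} (hs : s ∈ Ico 1 n) :
    Precedes r σ P s (s + 1) := by
  have hrule := hP s hs
  rw [precedes_iff]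
  split_ifs at hrule with hr
  · exact .inr ⟨hrule.symm, hr⟩
  · exact .inl (by lia)

theorem IsGreedy.succ_le_succ (hP : IsGreedy r σ n P) {s : ℕ} (hs : s ∈ Ico 1 n)
    (hQ : Precedes r σ Q s (s + 1)) (hle : P s ≤ Q s) : P (s + 1) ≤ Q (s + 1) := by
  have hrule := hP s hs
  rcases precedes_iff.1 hQ with hlt | ⟨hsame, hord⟩
  · split_ifs at hrule <;> lia
  · rcases hle.lt_or_eq with hlt | heq
    · split_ifs at hrule <;> lia
    · rw [heq, if_pos hord] at hrule
      exact (hrule.trans hsame).le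

theorem IsGreedy.le_of_sortsPiles (hP : IsGreedy r σ n P) (hQ : SortsPiles r σ n Q)
    (hone : P 1 ≤ Q 1) {s : ℕ} (hs : s ∈ Icc 1 n) : P s ≤ Q s := by
  obtain ⟨hs₁, hsn⟩ := hs
  induction s, hs₁ using Nat.le_induction with
  | base => exact hone
  | succ s hs₁ ih =>
    have hs : s ∈ Ico 1 n := ⟨hs₁, hsn⟩
    exact hP.succ_le_succ hs (hQ.precedes_succ hs) (ih hs.2.le)

theorem stmt_10_general [∀ i, IsStrictOrder α (r i)] (hP : IsGreedy r σ n P) :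
    SortsPiles r σ n P ∧
      ∀ Q : ℕ → ℕ, SortsPiles r σ n Q → P 1 ≤ Q 1 → ∀ s ∈ Icc 1 n, P s ≤ Q s :=
  ⟨sortsPiles_of_precedes_succ fun _ hs => hP.precedes_succ hs,
    fun _ hQ hone _ hs => hP.le_of_sortsPiles hQ hone hs⟩

end Greedy

section QueuesAndStacks

variable {α : Type*}

/-- The order in which a pile emits positions: increasing for a queue (`b = 0`), decreasing for a
stack (`b = 1`). -/
def pileOrder [LT α] (b : Fin 2) (p q : α) : Prop :=
  if b = 0 then p < q else q < p

instance [Preorder α] (b : Fin 2) : IsStrictOrder α (pileOrder b) where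
  irrefl p := by simp [pileOrder]
  trans p q u hpq hqu := by
    unfold pileOrder at *
    split_ifs at *
    · exact hpq.trans hqu
    · exact hqu.trans hpq

theorem not_pileOrder_iff [LinearOrder α] {b : Fin 2} {p q : α} (hne : p ≠ q) :
    ¬ pileOrder b p q ↔ (b = 0 ∧ q < p) ∨ (b = 1 ∧ p < q) := by
  fin_cases b
  · simpa [pileOrder] using hne.symm.le_iff_lt
  · simpa [pileOrder] using hne.le_iff_lt

theorem heteroSorts_iff {n : ℕ} {x : ℕ → Fin 2} {σ P : ℕ → ℕ} :
    HeteroSorts n x σ P ↔ SortsPiles (fun i => pileOrder (x i)) σ n P := by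
  simp only [HeteroSorts, SortsPiles, precedes_iff, pileOrder, Finset.mem_Icc, mem_Icc]

theorem isGreedy_pileOrder_iff [LinearOrder α] {n : ℕ} {x : ℕ → Fin 2} {σ : ℕ → α} {P : ℕ → ℕ}
    (hσ : InjOn σ (Icc 1 n)) :
    IsGreedy (fun i => pileOrder (x i)) σ n P ↔
      ∀ s ∈ Finset.Icc 1 (n - 1), P (s + 1) =
        if (x (P s) = 0 ∧ σ (s + 1) < σ s) ∨ (x (P s) = 1 ∧ σ s < σ (s + 1)) then P s + 1
        else P s := by
  have mem_iff (s : ℕ) : s ∈ Finset.Icc 1 (n - 1) ↔ s ∈ Ico 1 n := by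
    rw [Finset.mem_Icc, mem_Ico]
    lia
  simp only [mem_iff]
  refine forall₂_congr fun s hs => ?_
  have hne : σ s ≠ σ (s + 1) :=
    hσ.ne ⟨hs.1, hs.2.le⟩ ⟨Nat.le_add_left 1 s, hs.2⟩ s.lt_succ_self.ne
  classical rw [if_congr (not_pileOrder_iff hne).symm rfl rfl, ite_not]

end QueuesAndStacks

theorem stmt_10 (n : ℕ) (hn : 1 ≤ n) (σ : ℕ → ℕ)
    (hσ : Set.BijOn σ (Set.Icc 1 n) (Set.Icc 1 n))
    (x : ℕ → Fin 2) (Pstar : ℕ → ℕ)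
    (hPstar1 : Pstar 1 = 1)
    (hPstarRec : ∀ s ∈ Finset.Icc 1 (n - 1),
      Pstar (s + 1) =
        if (x (Pstar s) = 0 ∧ σ (s + 1) < σ s) ∨
           (x (Pstar s) = 1 ∧ σ s < σ (s + 1)) then
          Pstar s + 1
        else Pstar s) :
    HeteroSorts n x σ Pstar ∧
    ∀ P : ℕ → ℕ, HeteroSorts n x σ P → P 1 = 1 → Pstar n ≤ P n := by
  obtain ⟨hsorts, hmin⟩ := stmt_10_general ((isGreedy_pileOrder_iff hσ.injOn).2 hPstarRec)
  exact ⟨heteroSorts_iff.2 hsorts, fun P hP hP1 =>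
    hmin P (heteroSorts_iff.1 hP) (hPstar1.trans hP1.symm).le n ⟨hn, le_rfl⟩⟩
end

section
/- Let n ≥ 2 and let σ be a permutation of [n]. Define sequences p : [n] → ℕ and τ : [n] → {0,1} recursively as follows: p(1) = 1; for each s ∈ [n], if s = 1 or p(s) > p(s−1) (a new pile is opened by s) then τ(s) = 0 if s < n and σ(s+1) > σ(s), and τ(s) = 1 if s < n and σ(s+1) < σ(s) (and τ(n) = 0 if s = n opens a new pile), while if p(s) = p(s−1) then τ(s) = τ(s−1); and for s ∈ [n−1], p(s+1) = p(s) if (τ(s) = 0 and σ(s+1) > σ(s)) or (τ(s) = 1 and σ(s+1) < σ(s)), and p(s+1) = p(s) + 1 otherwise. Let x* : ℕ → {0,1} be any type indicator with x*(p(s)) = τ(s) for all s ∈ [n]. Then (x*, p) sorts σ, and for every type indicator x : ℕ → {0,1} and pile assignment P with (x, P) sorting σ and P(1) = 1, we have P(n) ≥ p(n). -/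
section PileAccepts

variable {α : Type*} [Preorder α] {c d : Fin 2} {a b : α}

/-- A pile of type `c` (`0` for a queue, `1` for a stack) whose last card has position `a` can take
a card with position `b` next. -/
def PileAccepts (c : Fin 2) (a b : α) : Prop :=
  (c = 0 ∧ a < b) ∨ (c = 1 ∧ b < a)

instance [DecidableLT α] : Decidable (PileAccepts c a b) :=
  inferInstanceAs (Decidable ((c = 0 ∧ a < b) ∨ (c = 1 ∧ b < a)))

theorem pileAccepts_iff_ite : PileAccepts c a b ↔ if c = 0 then a < b else b < a := by
  fin_cases c <;> simp [PileAccepts]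

theorem PileAccepts.ne (h : PileAccepts c a b) : a ≠ b := by
  rcases h with ⟨-, hlt⟩ | ⟨-, hlt⟩
  exacts [hlt.ne, hlt.ne']

theorem PileAccepts.type_unique (hc : PileAccepts c a b) (hd : PileAccepts d a b) : c = d := by
  rcases hc with ⟨rfl, hc⟩ | ⟨rfl, hc⟩ <;> rcases hd with ⟨rfl, hd⟩ | ⟨rfl, hd⟩
  exacts [rfl, (hc.asymm hd).elim, (hc.asymm hd).elim, rfl]

end PileAccepts

section HeteroSorts

variable {n s t : ℕ} {x : ℕ → Fin 2} {σ P : ℕ → ℕ} {c : Fin 2}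

/-- The sorting key of card `s` under the shuffle `(x, P)`: its pile, then its position in the deck,
negated if the pile is a stack. -/
def shuffleKey (x : ℕ → Fin 2) (σ P : ℕ → ℕ) (s : ℕ) : ℕ ×ₗ ℤ :=
  toLex (P s, if x (P s) = 0 then (σ s : ℤ) else -(σ s : ℤ))

theorem shuffleKey_lt_shuffleKey_iff :
    shuffleKey x σ P s < shuffleKey x σ P t ↔
      P s < P t ∨ (P s = P t ∧ PileAccepts (x (P s)) (σ s) (σ t)) := by
  rw [shuffleKey, shuffleKey, Prod.Lex.toLex_lt_toLex, pileAccepts_iff_ite]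
  refine or_congr_right (and_congr_right fun hpile : P s = P t => ?_)
  rw [← hpile]
  split_ifs <;> simp

theorem heteroSorts_iff_strictMonoOn :
    HeteroSorts n x σ P ↔ StrictMonoOn (shuffleKey x σ P) (Set.Icc 1 n) := by
  simp only [HeteroSorts, ← pileAccepts_iff_ite, ← shuffleKey_lt_shuffleKey_iff, Finset.mem_Icc]
  exact ⟨fun h s hs t ht => (h s hs t ht).mp, fun h s hs t ht => (h.lt_iff_lt hs ht).symm⟩

theorem heteroSorts_iff_forall_succ :
    HeteroSorts n x σ P ↔ ∀ s, 1 ≤ s → s < n →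
      P s < P (s + 1) ∨ (P s = P (s + 1) ∧ PileAccepts (x (P s)) (σ s) (σ (s + 1))) := by
  simp only [heteroSorts_iff_strictMonoOn, ← shuffleKey_lt_shuffleKey_iff]
  constructor
  · intro h s hs hsn
    exact h ⟨hs, hsn.le⟩ ⟨by omega, hsn⟩ s.lt_succ_self
  · intro h
    exact strictMonoOn_of_lt_succ Set.ordConnected_Icc fun s _ hs hs' => h s hs.1 hs'.2

theorem HeteroSorts.le_succ (hP : HeteroSorts n x σ P) (hs : 1 ≤ s) (hsn : s < n) :
    P s ≤ P (s + 1) :=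
  (heteroSorts_iff_forall_succ.mp hP s hs hsn).elim le_of_lt fun h => h.1.le

theorem HeteroSorts.accepts_succ (hP : HeteroSorts n x σ P) (hs : 1 ≤ s) (hsn : s < n)
    (hpile : P s = P (s + 1)) : PileAccepts (x (P s)) (σ s) (σ (s + 1)) :=
  ((heteroSorts_iff_forall_succ.mp hP s hs hsn).resolve_left hpile.not_lt).2

theorem HeteroSorts.lt_succ_of_eq (hP : HeteroSorts n x σ P) (hs : 1 ≤ s) (hsn : s < n)
    (hσ : σ s = σ (s + 1)) : P s < P (s + 1) :=
  (hP.le_succ hs hsn).lt_of_ne fun hpile => (hP.accepts_succ hs hsn hpile).ne hσ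

theorem HeteroSorts.lt_add_two_of_not_accepts (hP : HeteroSorts n x σ P) (hs : 1 ≤ s)
    (hsn : s + 1 < n) (hfits : PileAccepts c (σ s) (σ (s + 1)))
    (hbreaks : ¬ PileAccepts c (σ (s + 1)) (σ (s + 2))) : P s < P (s + 2) := by
  have hle₁ : P s ≤ P (s + 1) := hP.le_succ hs (by omega)
  have hle₂ : P (s + 1) ≤ P (s + 2) := hP.le_succ (by omega) hsn
  by_contra! hge
  have hpile₁ : P s = P (s + 1) := by omega
  have hpile₂ : P (s + 1) = P (s + 2) := by omega
  have htype : c = x (P s) := hfits.type_unique (hP.accepts_succ hs (by omega) hpile₁)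
  rw [htype, hpile₁] at hbreaks
  exact hbreaks (hP.accepts_succ (by omega) hsn hpile₂)

end HeteroSorts

/-- `(τ, p)` is a greedy choice of piles for the cards `1, …, n` at positions `σ`: `p s` is the pile
of card `s` and `τ s` is the type of that pile. A pile opened by `s` gets a type suiting `s + 1`,
and a new pile is opened only when the current one does not accept the next card. The type of a pile
opened by `n`, or opened by `s` with `σ s = σ (s + 1)`, is left free. -/
structure IsGreedyChoice {α : Type*} [LinearOrder α] (n : ℕ) (σ : ℕ → α) (p : ℕ → ℕ)
    (τ : ℕ → Fin 2) : Prop where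
  type_new : ∀ s ∈ Finset.Icc 1 n, (s = 1 ∨ p (s - 1) < p s) →
    (s < n → σ s < σ (s + 1) → τ s = 0) ∧ (s < n → σ (s + 1) < σ s → τ s = 1)
  type_old : ∀ s ∈ Finset.Icc 2 n, p s = p (s - 1) → τ s = τ (s - 1)
  pile_succ : ∀ s ∈ Finset.Icc 1 (n - 1),
    p (s + 1) = if PileAccepts (τ s) (σ s) (σ (s + 1)) then p s else p s + 1

namespace IsGreedyChoice

section LinearOrder

variable {α : Type*} [LinearOrder α] {n s : ℕ} {σ : ℕ → α} {p : ℕ → ℕ} {τ : ℕ → Fin 2}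

theorem pile_succ_eq_ite (h : IsGreedyChoice n σ p τ) (hs : 1 ≤ s) (hsn : s < n) :
    p (s + 1) = if PileAccepts (τ s) (σ s) (σ (s + 1)) then p s else p s + 1 :=
  h.pile_succ s (Finset.mem_Icc.mpr ⟨hs, by omega⟩)

theorem pile_succ_eq_iff (h : IsGreedyChoice n σ p τ) (hs : 1 ≤ s) (hsn : s < n) :
    p (s + 1) = p s ↔ PileAccepts (τ s) (σ s) (σ (s + 1)) := by
  simp [h.pile_succ_eq_ite hs hsn]

theorem accepts_of_new (h : IsGreedyChoice n σ p τ) (hs : 1 ≤ s) (hsn : s < n)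
    (hnew : s = 1 ∨ p (s - 1) < p s) (hσ : σ s ≠ σ (s + 1)) :
    PileAccepts (τ s) (σ s) (σ (s + 1)) := by
  obtain ⟨hqueue, hstack⟩ := h.type_new s (Finset.mem_Icc.mpr ⟨hs, hsn.le⟩) hnew
  exact hσ.lt_or_gt.imp (fun hlt => ⟨hqueue hsn hlt, hlt⟩) (fun hgt => ⟨hstack hsn hgt, hgt⟩)

theorem accepts_of_pile_succ_eq (h : IsGreedyChoice n σ p τ) (hs : 1 ≤ s) (hsn : s < n)
    (hpile : p (s + 1) = p s) : PileAccepts (τ (s + 1)) (σ s) (σ (s + 1)) := by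
  have htype : τ (s + 1) = τ s := h.type_old (s + 1) (Finset.mem_Icc.mpr ⟨by omega, hsn⟩) hpile
  rw [htype]
  exact (h.pile_succ_eq_iff hs hsn).mp hpile

theorem exists_pred_of_not_accepts (h : IsGreedyChoice n σ p τ) (hs : 1 ≤ s) (hsn : s < n)
    (hσ : σ s ≠ σ (s + 1)) (hbreaks : ¬ PileAccepts (τ s) (σ s) (σ (s + 1))) :
    ∃ r, 1 ≤ r ∧ s = r + 1 ∧ p s = p r ∧ PileAccepts (τ s) (σ r) (σ s) := by
  have hold : ¬ (s = 1 ∨ p (s - 1) < p s) := fun hnew => hbreaks (h.accepts_of_new hs hsn hnew hσ)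
  push Not at hold
  obtain ⟨r, rfl⟩ := Nat.exists_eq_add_of_le' hs
  have hr : 1 ≤ r := by omega
  have hpile : p (r + 1) = p r := by
    have hle : p (r + 1) ≤ p r := hold.2
    have hrec := h.pile_succ_eq_ite hr (by omega)
    split_ifs at hrec <;> omega
  exact ⟨r, hr, rfl, hpile, h.accepts_of_pile_succ_eq hr (by omega) hpile⟩

end LinearOrder

variable {n : ℕ} {σ p P : ℕ → ℕ} {τ x : ℕ → Fin 2}

theorem heteroSorts (h : IsGreedyChoice n σ p τ) (hx : ∀ s ∈ Finset.Icc 1 n, x (p s) = τ s) :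
    HeteroSorts n x σ p := by
  refine heteroSorts_iff_forall_succ.mpr fun s hs hsn => ?_
  rw [hx s (Finset.mem_Icc.mpr ⟨hs, hsn.le⟩), h.pile_succ_eq_ite hs hsn]
  split_ifs with hacc
  · exact Or.inr ⟨rfl, hacc⟩
  · exact Or.inl (p s).lt_succ_self

theorem pile_le_of_heteroSorts (h : IsGreedyChoice n σ p τ) (hP : HeteroSorts n x σ P)
    (hfirst : p 1 ≤ P 1) {s : ℕ} (hs : 1 ≤ s) (hsn : s ≤ n) : p s ≤ P s := by
  induction s using Nat.strong_induction_on with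
  | _ s ih =>
  obtain rfl | ⟨s, hs', rfl⟩ : s = 1 ∨ ∃ t, 1 ≤ t ∧ s = t + 1 := by
    rcases hs.eq_or_lt with rfl | hlt
    exacts [.inl rfl, .inr ⟨s - 1, by omega, by omega⟩]
  · exact hfirst
  have hle : p s ≤ P s := ih s (by omega) hs' (by omega)
  rw [h.pile_succ_eq_ite hs' hsn]
  split_ifs with hacc
  · exact hle.trans (hP.le_succ hs' hsn)
  by_cases hσ : σ s = σ (s + 1)
  · exact hle.trans_lt (hP.lt_succ_of_eq hs' hsn hσ)
  obtain ⟨r, hr, rfl, hpile, hfits⟩ := h.exists_pred_of_not_accepts hs' hsn hσ hacc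
  calc p (r + 1) = p r := hpile
    _ ≤ P r := ih r (by omega) hr (by omega)
    _ < P (r + 2) := hP.lt_add_two_of_not_accepts hr hsn hfits hacc

end IsGreedyChoice

theorem stmt_11_general {n : ℕ} {σ p : ℕ → ℕ} {τ xstar : ℕ → Fin 2}
    (h : IsGreedyChoice n σ p τ) (hxstar : ∀ s ∈ Finset.Icc 1 n, xstar (p s) = τ s) :
    HeteroSorts n xstar σ p ∧
    ∀ (x : ℕ → Fin 2) (P : ℕ → ℕ), HeteroSorts n x σ P → p 1 ≤ P 1 →
      ∀ s ∈ Finset.Icc 1 n, p s ≤ P s :=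
  ⟨h.heteroSorts hxstar, fun _ _ hP hfirst _ hs =>
    h.pile_le_of_heteroSorts hP hfirst (Finset.mem_Icc.mp hs).1 (Finset.mem_Icc.mp hs).2⟩

theorem stmt_11 (n : ℕ) (hn : 2 ≤ n) (σ : ℕ → ℕ)
    (hσ : Set.BijOn σ (Set.Icc 1 n) (Set.Icc 1 n))
    (p : ℕ → ℕ) (τ : ℕ → Fin 2)
    (hp1 : p 1 = 1)
    -- greedy typing of each newly opened pile
    (hτnew : ∀ s ∈ Finset.Icc 1 n, (s = 1 ∨ p (s - 1) < p s) →
      ((s < n → σ s < σ (s + 1) → τ s = 0) ∧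
       (s < n → σ (s + 1) < σ s → τ s = 1) ∧
       (s = n → τ s = 0)))
    -- cards in the same pile inherit the pile's type
    (hτold : ∀ s ∈ Finset.Icc 2 n, p s = p (s - 1) → τ s = τ (s - 1))
    -- pile-assignment recurrence
    (hpRec : ∀ s ∈ Finset.Icc 1 (n - 1),
      p (s + 1) =
        if (τ s = 0 ∧ σ s < σ (s + 1)) ∨ (τ s = 1 ∧ σ (s + 1) < σ s) then
          p s
        else p s + 1)
    -- any type indicator agreeing with τ on the piles used
    (xstar : ℕ → Fin 2)
    (hxstar : ∀ s ∈ Finset.Icc 1 n, xstar (p s) = τ s) :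
    HeteroSorts n xstar σ p ∧
    ∀ (x : ℕ → Fin 2) (P : ℕ → ℕ), HeteroSorts n x σ P → P 1 = 1 →
      p n ≤ P n := by
  have greedy : IsGreedyChoice n σ p τ :=
    ⟨fun s hs hnew => ⟨(hτnew s hs hnew).1, (hτnew s hs hnew).2.1⟩, hτold, hpRec⟩
  obtain ⟨hsorts, hoptimal⟩ := stmt_11_general greedy hxstar
  exact ⟨hsorts, fun x P hP hP1 =>
    hoptimal x P hP (hp1.trans hP1.symm).le n (Finset.mem_Icc.mpr ⟨by omega, le_rfl⟩)⟩
end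

section
/- Let n ≥ 1 and T ≥ 1, let m_1, …, m_T ≥ 1, and for each t ∈ [T] let P_t : [n] → {0, 1, …, m_t − 1} be a pile assignment. Let σ_0 = σ be a permutation of [n] and let σ_1, …, σ_T be permutations of [n] with QShuffle(P_t, σ_{t−1}) = σ_t for each t ∈ [T]. Define P̂_T = P_T and P̂_t = P_t + m_t · P̂_{t+1} for 1 ≤ t ≤ T − 1. Then QShuffle(P̂_1, σ) = σ_T. -/
/-- `QShuffle(P, σ) = σ'`: a single round of pile shuffle on queues with
assignments `P` transforms `σ` into `σ'`: for all `s, t ∈ [n]`,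
`σ' s < σ' t` iff `(P s, σ s)` is lexicographically less than `(P t, σ t)`. -/
def QShuffle (n : ℕ) (P σ σ' : ℕ → ℕ) : Prop :=
  ∀ s ∈ Finset.Icc 1 n, ∀ t ∈ Finset.Icc 1 n,
    (σ' s < σ' t ↔ P s < P t ∨ (P s = P t ∧ σ s < σ t))

/-!
Two consecutive rounds, the first with assignment `P` (values below `m`) and the second with `Q`,
act as one round with assignment `P + m * Q`: the low base-`m` digit of `P + m * Q` is `P`, so
comparing its values is comparing `(Q, P)` lexicographically, and the second round breaks ties in
`Q` by the order that the first round produced. Merging rounds from the last one backwards yields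
the virtual assignment.
-/

theorem add_mul_lt_add_mul_iff_of_lt {m a b c d : ℕ} (ha : a < m) (hb : b < m) :
    a + m * c < b + m * d ↔ c < d ∨ c = d ∧ a < b := by
  have add_mul_lt_of_lt {x y u v : ℕ} (hx : x < m) (huv : u < v) : x + m * u < y + m * v :=
    (Nat.add_mul_lt_mul_of_lt_of_lt hx huv).trans_le (Nat.le_add_left _ _)
  rcases lt_trichotomy c d with hcd | rfl | hdc
  · simp only [hcd, add_mul_lt_of_lt ha hcd, true_or]
  · simp only [add_lt_add_iff_right, lt_irrefl, true_and, false_or]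
  · simp only [hdc.not_gt, hdc.ne', (add_mul_lt_of_lt hb hdc).not_gt, false_and, or_self]

theorem add_mul_eq_add_mul_iff_of_lt {m a b c d : ℕ} (ha : a < m) (hb : b < m) :
    a + m * c = b + m * d ↔ c = d ∧ a = b := by
  have hlt := add_mul_lt_add_mul_iff_of_lt (c := c) (d := d) ha hb
  have hgt := add_mul_lt_add_mul_iff_of_lt (c := d) (d := c) hb ha
  omega

theorem QShuffle.comp {n m : ℕ} {P Q σ σ' σ'' : ℕ → ℕ} (hP : ∀ s ∈ Finset.Icc 1 n, P s < m)
    (h₁ : QShuffle n P σ σ') (h₂ : QShuffle n Q σ' σ'') :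
    QShuffle n (fun s => P s + m * Q s) σ σ'' := by
  intro s hs t ht
  rw [h₂ s hs t ht, h₁ s hs t ht, add_mul_lt_add_mul_iff_of_lt (hP s hs) (hP t ht),
    add_mul_eq_add_mul_iff_of_lt (hP s hs) (hP t ht)]
  tauto

/-- Here `σs t` is the deck before round `t`; in `stmt_14` it is the deck after that round. -/
theorem stmt_14_general {n a b : ℕ} (hab : a ≤ b) {m : ℕ → ℕ} {P Phat σs : ℕ → ℕ → ℕ}
    (hP : ∀ t ∈ Finset.Ico a b, ∀ s ∈ Finset.Icc 1 n, P t s < m t)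
    (hrounds : ∀ t ∈ Finset.Icc a b, QShuffle n (P t) (σs t) (σs (t + 1)))
    (hPhat_last : ∀ s, Phat b s = P b s)
    (hPhat_rec : ∀ t ∈ Finset.Ico a b, ∀ s, Phat t s = P t s + m t * Phat (t + 1) s) :
    QShuffle n (Phat a) (σs a) (σs (b + 1)) := by
  refine Nat.decreasingInduction' (fun t htb hat ih => ?_) hab ?_
  · have ht : t ∈ Finset.Ico a b := Finset.mem_Ico.2 ⟨hat, htb⟩
    rw [funext (hPhat_rec t ht)]
    exact (hrounds t (Finset.Ico_subset_Icc_self ht)).comp (hP t ht) ih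
  · rw [funext hPhat_last]
    exact hrounds b (Finset.right_mem_Icc.2 hab)

theorem stmt_14 (n T : ℕ) (hn : 1 ≤ n) (hT : 1 ≤ T)
    (m : ℕ → ℕ) (hm : ∀ t ∈ Finset.Icc 1 T, 1 ≤ m t)
    (P : ℕ → ℕ → ℕ)
    (hP : ∀ t ∈ Finset.Icc 1 T, ∀ s ∈ Finset.Icc 1 n, P t s < m t)
    (σ : ℕ → ℕ) (hσ : Set.BijOn σ (Set.Icc 1 n) (Set.Icc 1 n))
    (σs : ℕ → ℕ → ℕ) (hσ0 : σs 0 = σ)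
    (hσsbij : ∀ t ∈ Finset.Icc 1 T,
      Set.BijOn (σs t) (Set.Icc 1 n) (Set.Icc 1 n))
    (hrounds : ∀ t ∈ Finset.Icc 1 T, QShuffle n (P t) (σs (t - 1)) (σs t))
    -- the virtual pile assignment P̂
    (Phat : ℕ → ℕ → ℕ)
    (hPhatT : ∀ s, Phat T s = P T s)
    (hPhatRec : ∀ t ∈ Finset.Icc 1 (T - 1), ∀ s,
      Phat t s = P t s + m t * Phat (t + 1) s) :
    QShuffle n (Phat 1) σ (σs T) := by
  subst hσ0
  rw [Finset.Icc_sub_one_right_eq_Ico_of_not_isMin (not_isMin_of_lt hT)] at hPhatRec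
  exact stmt_14_general (σs := fun t => σs (t - 1)) hT
    (fun t ht => hP t (Finset.Ico_subset_Icc_self ht)) hrounds hPhatT hPhatRec
end

section
/- Let n ≥ 1 and T ≥ 1, let m_1, …, m_T ≥ 1, and let σ be a permutation of [n]. There exist pile assignments P_t : [n] → {0, 1, …, m_t − 1} and permutations σ_0 = σ, σ_1, …, σ_T of [n] with SShuffle(P_t, σ_{t−1}) = σ_t for each t ∈ [T] and σ_T equal to the identity permutation, if and only if either T is even and ascruns(σ) ≤ ∏_{t=1}^{T} m_t, or T is odd and descruns(σ) ≤ ∏_{t=1}^{T} m_t. -/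
/-- `SShuffle(P, σ) = σ'`: a single round of pile shuffle on stacks with
assignments `P` transforms `σ` into `σ'`: for all `s, t ∈ [n]`,
`σ' s < σ' t` iff `P s < P t`, or `P s = P t` and `σ s > σ t`. -/
def SShuffle (n : ℕ) (P σ σ' : ℕ → ℕ) : Prop :=
  ∀ s ∈ Finset.Icc 1 n, ∀ t ∈ Finset.Icc 1 n,
    (σ' s < σ' t ↔ P s < P t ∨ (P s = P t ∧ σ t < σ s))

/-- The number of descending runs of `σ`, `1 + ascs(σ)`. -/
def descRuns (n : ℕ) (σ : ℕ → ℕ) : ℕ := 1 + ascents n σ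

/-!
The order of the final deck compares `P_T` first, then `P_{T-1}` reversed, then `P_{T-2}`, and so on
with alternating directions, and breaks ties by `σ` (`T` even) or by `σ` reversed (`T` odd). Reading
`P_T, P_{T-1}, …`, with every second digit complemented, as a mixed-radix numeral merges all rounds
into one label `Q s < ∏ m_t`, and every such `Q` arises in this way. So the reachable decks are
exactly those ordered lexicographically by `(Q, (-1)^T σ)` for some `Q < ∏ m_t`.

The identity has this order if and only if `Q` is weakly increasing and strictly increases at each
descent of `ρ = (-1)^T σ`. The least such `Q` counts the descents to the left, so one below
`∏ m_t` exists if and only if `1 + desc ρ ≤ ∏ m_t`.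
-/

section SameOrder

variable {α β γ δ : Type*}

/-- The functions `f` and `g` order the elements of `S` in the same way. This is how a deck (a
position function) is compared with the key by which its cards are sorted. -/
def SameOrderOn [LT β] [LT γ] (S : Set α) (f : α → β) (g : α → γ) : Prop :=
  ∀ s ∈ S, ∀ t ∈ S, (f s < f t ↔ g s < g t)

lemma SameOrderOn.symm [LT β] [LT γ] {S : Set α} {f : α → β} {g : α → γ}
    (h : SameOrderOn S f g) : SameOrderOn S g f :=
  fun s hs t ht => (h s hs t ht).symm

lemma SameOrderOn.trans [LT β] [LT γ] [LT δ] {S : Set α} {f : α → β} {g : α → γ} {k : α → δ}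
    (hfg : SameOrderOn S f g) (hgk : SameOrderOn S g k) : SameOrderOn S f k :=
  fun s hs t ht => (hfg s hs t ht).trans (hgk s hs t ht)

lemma sameOrderOn_of_eqOn [LT β] {S : Set α} {f g : α → β} (h : Set.EqOn f g S) :
    SameOrderOn S f g :=
  fun s hs t ht => by rw [h hs, h ht]

lemma sameOrderOn_id_iff_strictMonoOn [LinearOrder α] [Preorder β] {S : Set α} {k : α → β} :
    SameOrderOn S id k ↔ StrictMonoOn k S :=
  ⟨fun h s hs t ht => (h s hs t ht).1, fun h _ hs _ ht => (h.lt_iff_lt hs ht).symm⟩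

/-- The rank of `s` among the elements of `S` sorted by the key `k`, counted from `1` for elements
of `S`. It serves as the deck that realizes the order of `k`. -/
def rankOn [LinearOrder β] (S : Finset α) (k : α → β) (s : α) : ℕ :=
  (S.filter fun u => k u ≤ k s).card

variable [LinearOrder β] [LinearOrder γ] {S : Finset α}

lemma sameOrderOn_rankOn (S : Finset α) (k : α → β) : SameOrderOn S (rankOn S k) k := by
  intro s _ t ht
  constructor
  · contrapose!
    exact fun hts => Finset.card_le_card <|
      Finset.monotone_filter_right S fun _ _ hu => hu.trans hts
  · intro hst
    refine Finset.card_lt_card (Finset.ssubset_iff_of_subset ?_ |>.2 ⟨t, ?_, ?_⟩)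
    · exact Finset.monotone_filter_right S fun _ _ hu => hu.trans hst.le
    · simpa using ht
    · simp [hst]

lemma bijOn_rankOn {k : α → β} (hk : Set.InjOn k S) :
    Set.BijOn (rankOn S k) S (Set.Icc 1 S.card) := by
  have maps : Set.MapsTo (rankOn S k) S (Finset.Icc 1 S.card) := fun s hs =>
    Finset.mem_Icc.2 ⟨Finset.card_pos.2 ⟨s, by simpa using hs⟩, Finset.card_filter_le _ _⟩
  have inj : Set.InjOn (rankOn S k) S := fun s hs t ht hst => by
    have not_lt : ¬ k s < k t := (sameOrderOn_rankOn S k s hs t ht).not.1 hst.not_lt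
    have not_gt : ¬ k t < k s := (sameOrderOn_rankOn S k t ht s hs).not.1 hst.not_gt
    exact hk hs ht (le_antisymm (le_of_not_gt not_gt) (le_of_not_gt not_lt))
  have surj := Finset.surjOn_of_injOn_of_card_le (rankOn S k) maps inj (by simp)
  rw [← Finset.coe_Icc]
  exact ⟨maps, inj, surj⟩

lemma rankOn_eq_self {N : ℕ} {τ : α → ℕ} (hτ : Set.BijOn τ S (Set.Icc 1 N)) {s : α} (hs : s ∈ S) :
    rankOn S τ s = τ s := by
  have image : (S.filter fun u => τ u ≤ τ s).image τ = Finset.Icc 1 (τ s) := by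
    ext v
    simp only [Finset.mem_image, Finset.mem_filter, Finset.mem_Icc]
    constructor
    · rintro ⟨u, ⟨hu, hus⟩, rfl⟩
      exact ⟨(hτ.mapsTo hu).1, hus⟩
    · rintro ⟨hv, hvs⟩
      obtain ⟨u, hu, rfl⟩ := hτ.surjOn ⟨hv, hvs.trans (hτ.mapsTo hs).2⟩
      exact ⟨u, ⟨hu, hvs⟩, rfl⟩
  have inj : Set.InjOn τ (S.filter fun u => τ u ≤ τ s) :=
    hτ.injOn.mono (Finset.coe_subset.2 (Finset.filter_subset _ S))
  rw [rankOn, ← Finset.card_image_of_injOn inj, image, Nat.card_Icc, Nat.add_sub_cancel]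

lemma SameOrderOn.rankOn_eq {f : α → β} {g : α → γ} (h : SameOrderOn S f g) {s : α} (hs : s ∈ S) :
    rankOn S f s = rankOn S g s := by
  refine congrArg Finset.card (Finset.filter_congr fun u hu => ?_)
  rw [← not_lt, ← not_lt, h s hs u hu]

lemma SameOrderOn.eqOn_of_bijOn_Icc {N : ℕ} {f g : α → ℕ} (h : SameOrderOn S f g)
    (hf : Set.BijOn f S (Set.Icc 1 N)) (hg : Set.BijOn g S (Set.Icc 1 N)) : Set.EqOn f g S :=
  fun _ hs => (rankOn_eq_self hf hs).symm.trans ((h.rankOn_eq hs).trans (rankOn_eq_self hg hs))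

end SameOrder

lemma mul_add_lt_mul_add_iff_lex {M a b x y : ℕ} (hx : x < M) (hy : y < M) :
    a * M + x < b * M + y ↔ a < b ∨ (a = b ∧ x < y) := by
  rcases lt_trichotomy a b with h | rfl | h
  · have : (a + 1) * M ≤ b * M := Nat.mul_le_mul_right M h
    grind
  · simp
  · have : (b + 1) * M ≤ a * M := Nat.mul_le_mul_right M h
    grind

lemma mul_add_eq_mul_add_iff {M a b x y : ℕ} (hx : x < M) (hy : y < M) :
    a * M + x = b * M + y ↔ a = b ∧ x = y := by
  have lt_iff := mul_add_lt_mul_add_iff_lex (a := a) (b := b) hx hy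
  have gt_iff := mul_add_lt_mul_add_iff_lex (a := b) (b := a) hy hx
  omega

/-- Complementing the lower part accounts for the reversal of the deck `τ` by a shuffle round. -/
lemma SameOrderOn.prepend_digit {α β G : Type*} [LT β] [AddCommGroup G] [PartialOrder G]
    [IsOrderedAddMonoid G] {S : Set α} {M : ℕ} {τ : α → β} {Q : α → ℕ} {ρ : α → G}
    (h : SameOrderOn S τ fun s => toLex (Q s, ρ s)) (hQ : ∀ s ∈ S, Q s < M) (P : α → ℕ) :
    SameOrderOn S (fun s => toLex (P s, OrderDual.toDual (τ s)))
      (fun s => toLex (P s * M + (M - 1 - Q s), -ρ s)) := by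
  intro s hs t ht
  have hQs := hQ s hs
  have hQt := hQ t ht
  have tau_lt := h t ht s hs
  have complement_s_lt : M - 1 - Q s < M := by omega
  have complement_t_lt : M - 1 - Q t < M := by omega
  simp only [Prod.Lex.toLex_lt_toLex, OrderDual.toDual_lt_toDual, neg_lt_neg_iff] at tau_lt ⊢
  rw [tau_lt, mul_add_lt_mul_add_iff_lex complement_s_lt complement_t_lt,
    mul_add_eq_mul_add_iff complement_s_lt complement_t_lt]
  grind

section ReflectedLabel

/-- The value of the digits `p T, p (T - 1), …, p 1` in the mixed radix `m T, …, m 1`, where all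
digits below each digit are complemented; thus `p (T - 1)` is complemented, `p (T - 2)` is not, and
so on. This merges the piles of a card in `T` rounds into its pile in one round. -/
def reflectedLabel (m p : ℕ → ℕ) : ℕ → ℕ
  | 0 => 0
  | T + 1 => p (T + 1) * ∏ t ∈ Finset.Icc 1 T, m t +
      (∏ t ∈ Finset.Icc 1 T, m t - 1 - reflectedLabel m p T)

variable {m p : ℕ → ℕ} {T : ℕ}

lemma reflectedLabel_lt (hp : ∀ t ∈ Finset.Icc 1 T, p t < m t) :
    reflectedLabel m p T < ∏ t ∈ Finset.Icc 1 T, m t := by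
  induction T with
  | zero => simp [reflectedLabel]
  | succ T ih =>
    have subset : Finset.Icc 1 T ⊆ Finset.Icc 1 (T + 1) := Finset.Icc_subset_Icc_right (by omega)
    have lower_lt := ih fun t ht => hp t (subset ht)
    rw [reflectedLabel, Finset.prod_Icc_succ_top (by omega)]
    set M := ∏ t ∈ Finset.Icc 1 T, m t
    calc p (T + 1) * M + (M - 1 - reflectedLabel m p T)
        < p (T + 1) * M + M := by omega
      _ = (p (T + 1) + 1) * M := by ring
      _ ≤ m (T + 1) * M := Nat.mul_le_mul_right M (hp (T + 1) (by simp))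
      _ = M * m (T + 1) := mul_comm _ _

lemma reflectedLabel_congr {p' : ℕ → ℕ} (h : ∀ t ∈ Finset.Icc 1 T, p t = p' t) :
    reflectedLabel m p T = reflectedLabel m p' T := by
  induction T with
  | zero => rfl
  | succ T ih =>
    have subset : Finset.Icc 1 T ⊆ Finset.Icc 1 (T + 1) := Finset.Icc_subset_Icc_right (by omega)
    rw [reflectedLabel, reflectedLabel, ih fun t ht => h t (subset ht), h (T + 1) (by simp)]

lemma exists_reflectedLabel_eq {q : ℕ} (hq : q < ∏ t ∈ Finset.Icc 1 T, m t) :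
    ∃ p : ℕ → ℕ, (∀ t ∈ Finset.Icc 1 T, p t < m t) ∧ reflectedLabel m p T = q := by
  induction T generalizing q with
  | zero => exact ⟨0, by simp, by simpa [reflectedLabel, eq_comm] using hq⟩
  | succ T ih =>
    rw [Finset.prod_Icc_succ_top (by omega)] at hq
    set M := ∏ t ∈ Finset.Icc 1 T, m t with hM
    have M_pos : 0 < M := pos_of_mul_pos_left (pos_of_gt hq) (Nat.zero_le _)
    obtain ⟨p, hp, hlabel⟩ := ih (q := M - 1 - q % M) (by omega)
    have update_eq : ∀ t ∈ Finset.Icc 1 T, Function.update p (T + 1) (q / M) t = p t :=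
      fun t ht => Function.update_of_ne (by grind) _ _
    refine ⟨Function.update p (T + 1) (q / M), fun t ht => ?_, ?_⟩
    · rcases eq_or_ne t (T + 1) with rfl | ht'
      · simpa using Nat.div_lt_of_lt_mul hq
      · rw [Function.update_of_ne ht']
        exact hp t (by grind)
    · rw [reflectedLabel, reflectedLabel_congr update_eq, hlabel, ← hM, Function.update_self]
      have := Nat.mod_lt q M_pos
      have := Nat.div_add_mod' q M
      omega

end ReflectedLabel

section Decks

variable {n T : ℕ} {m σ τ : ℕ → ℕ} {P σs : ℕ → ℕ → ℕ}

lemma sShuffle_iff_sameOrderOn {P σ' : ℕ → ℕ} :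
    SShuffle n P σ σ' ↔
      SameOrderOn (Finset.Icc 1 n) σ' fun s => toLex (P s, OrderDual.toDual (σ s)) := by
  simp only [SShuffle, SameOrderOn, Finset.mem_coe, Prod.Lex.toLex_lt_toLex,
    OrderDual.toDual_lt_toDual]

/-- The key by which the cards of the deck `σ` are sorted after `T` rounds with the pile assignments
`P 1, …, P T`: the merged pile, with ties broken by `σ` or its reverse according to the parity of
`T`. -/
def roundsKey (m : ℕ → ℕ) (P : ℕ → ℕ → ℕ) (σ : ℕ → ℕ) (T s : ℕ) : ℕ ×ₗ ℤ :=
  toLex (reflectedLabel m (P · s) T, (-1) ^ T * σ s)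

lemma sameOrderOn_roundsKey_zero {S : Set ℕ} : SameOrderOn S σ (roundsKey m P σ 0) := by
  simp [SameOrderOn, roundsKey, reflectedLabel, Prod.Lex.toLex_lt_toLex]

lemma SameOrderOn.roundsKey_succ {S : Set ℕ}
    (hP : ∀ t ∈ Finset.Icc 1 T, ∀ s ∈ S, P t s < m t) (h : SameOrderOn S τ (roundsKey m P σ T)) :
    SameOrderOn S (fun s => toLex (P (T + 1) s, OrderDual.toDual (τ s)))
      (roundsKey m P σ (T + 1)) := by
  have key_succ : roundsKey m P σ (T + 1) = fun s =>
      toLex (P (T + 1) s * ∏ t ∈ Finset.Icc 1 T, m t +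
        (∏ t ∈ Finset.Icc 1 T, m t - 1 - reflectedLabel m (P · s) T), -((-1) ^ T * (σ s : ℤ))) := by
    funext s
    rw [roundsKey, reflectedLabel, pow_succ', neg_one_mul, neg_mul]
  rw [key_succ]
  exact h.prepend_digit (fun s hs => reflectedLabel_lt fun t ht => hP t ht s hs) (P (T + 1))

lemma sShuffle_rounds_iff_sameOrderOn
    (hP : ∀ t ∈ Finset.Icc 1 T, ∀ s ∈ Finset.Icc 1 n, P t s < m t) :
    (∀ t ∈ Finset.Icc 1 T, SShuffle n (P t) (σs (t - 1)) (σs t)) ↔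
      ∀ t ≤ T, SameOrderOn (Finset.Icc 1 n) (σs t) (roundsKey m P (σs 0) t) := by
  have key_succ {t : ℕ} (ht : t + 1 ≤ T)
      (h : SameOrderOn (Finset.Icc 1 n) (σs t) (roundsKey m P (σs 0) t)) :=
    h.roundsKey_succ fun u hu => hP u (by grind)
  constructor
  · intro hS t ht
    induction t with
    | zero => exact sameOrderOn_roundsKey_zero
    | succ t ih =>
      have round := sShuffle_iff_sameOrderOn.1 (hS (t + 1) (by grind))
      exact round.trans (key_succ ht (ih (by omega)))
  · intro h t ht
    obtain ⟨t, rfl⟩ := Nat.exists_eq_add_of_le' (Finset.mem_Icc.1 ht).1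
    have htT : t + 1 ≤ T := (Finset.mem_Icc.1 ht).2
    exact sShuffle_iff_sameOrderOn.2 ((h _ htT).trans (key_succ htT (h t (by omega))).symm)

lemma injOn_neg_one_pow_mul {S : Set ℕ} (hσ : Set.InjOn σ S) (T : ℕ) :
    Set.InjOn (fun s => (-1 : ℤ) ^ T * σ s) S :=
  fun _ hs _ ht h => hσ hs ht (by simpa using h)

lemma exists_decks_sameOrderOn_roundsKey (hσ : Set.BijOn σ (Set.Icc 1 n) (Set.Icc 1 n))
    (m : ℕ → ℕ) (P : ℕ → ℕ → ℕ) :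
    ∃ σs : ℕ → ℕ → ℕ, σs 0 = σ ∧ ∀ t, Set.BijOn (σs t) (Set.Icc 1 n) (Set.Icc 1 n) ∧
      SameOrderOn (Finset.Icc 1 n) (σs t) (roundsKey m P σ t) := by
  refine ⟨fun | 0 => σ | t + 1 => rankOn (Finset.Icc 1 n) (roundsKey m P σ (t + 1)), rfl, ?_⟩
  rintro (_ | t)
  · exact ⟨hσ, sameOrderOn_roundsKey_zero⟩
  · have key_inj : Set.InjOn (roundsKey m P σ (t + 1)) (Finset.Icc 1 n) := fun s hs u hu hsu =>
      injOn_neg_one_pow_mul (by simpa using hσ.injOn) (t + 1) hs hu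
        (congrArg (fun k => (ofLex k).2) hsu)
    exact ⟨by simpa using bijOn_rankOn key_inj, sameOrderOn_rankOn _ _⟩

lemma exists_sShuffle_rounds_iff_exists_label (hσ : Set.BijOn σ (Set.Icc 1 n) (Set.Icc 1 n))
    (hτ : Set.BijOn τ (Set.Icc 1 n) (Set.Icc 1 n)) :
    (∃ (P : ℕ → ℕ → ℕ) (σs : ℕ → ℕ → ℕ),
      σs 0 = σ ∧
      (∀ t ∈ Finset.Icc 1 T, Set.BijOn (σs t) (Set.Icc 1 n) (Set.Icc 1 n)) ∧
      (∀ t ∈ Finset.Icc 1 T, ∀ s ∈ Finset.Icc 1 n, P t s < m t) ∧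
      (∀ t ∈ Finset.Icc 1 T, SShuffle n (P t) (σs (t - 1)) (σs t)) ∧
      (∀ s ∈ Finset.Icc 1 n, σs T s = τ s)) ↔
    ∃ Q : ℕ → ℕ, (∀ s ∈ Finset.Icc 1 n, Q s < ∏ t ∈ Finset.Icc 1 T, m t) ∧
      SameOrderOn (Finset.Icc 1 n) τ fun s => toLex (Q s, (-1 : ℤ) ^ T * σ s) := by
  constructor
  · rintro ⟨P, σs, rfl, -, hP, hS, hend⟩
    exact ⟨fun s => reflectedLabel m (P · s) T,
      fun s hs => reflectedLabel_lt fun t ht => hP t ht s hs,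
      (sameOrderOn_of_eqOn hend).symm.trans
        ((sShuffle_rounds_iff_sameOrderOn hP).1 hS T le_rfl)⟩
  · rintro ⟨Q, hQ, hτQ⟩
    choose! p hp hpQ using fun s hs => exists_reflectedLabel_eq (hQ s hs)
    obtain ⟨σs, rfl, hσs⟩ := exists_decks_sameOrderOn_roundsKey hσ m fun t s => p s t
    have hP : ∀ t ∈ Finset.Icc 1 T, ∀ s ∈ Finset.Icc 1 n, p s t < m t :=
      fun t ht s hs => hp s hs t ht
    have key_eq : Set.EqOn (fun s => toLex (Q s, (-1 : ℤ) ^ T * σs 0 s))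
        (roundsKey m (fun t s => p s t) (σs 0) T) (Finset.Icc 1 n) := fun s hs => by
      rw [roundsKey, hpQ s hs]
    have same_order : SameOrderOn (Finset.Icc 1 n) (σs T) τ :=
      (hσs T).2.trans ((sameOrderOn_of_eqOn key_eq).symm.trans hτQ.symm)
    refine ⟨fun t s => p s t, σs, rfl, fun t _ => (hσs t).1, hP,
      (sShuffle_rounds_iff_sameOrderOn hP).2 fun t _ => (hσs t).2, ?_⟩
    exact same_order.eqOn_of_bijOn_Icc (by simpa using (hσs T).1) (by simpa using hτ)

end Decks

section Descents

variable {α : Type*} [LinearOrder α] {ρ : ℕ → α} {n : ℕ}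

/-- The number of descents of `ρ` at positions in `[1, s)`. As a function of `s` it is the least
label that sorts `[n]` increasingly with ties broken by `ρ`. -/
def descentsBefore (ρ : ℕ → α) (s : ℕ) : ℕ :=
  ((Finset.Ico 1 s).filter fun i => ρ (i + 1) < ρ i).card

lemma descentsBefore_mono (ρ : ℕ → α) : Monotone (descentsBefore ρ) := fun _ _ h =>
  Finset.card_le_card (Finset.filter_subset_filter _ (Finset.Ico_subset_Ico_right h))

lemma descentsBefore_succ (ρ : ℕ → α) {s : ℕ} (hs : 1 ≤ s) :
    descentsBefore ρ (s + 1) = descentsBefore ρ s + if ρ (s + 1) < ρ s then 1 else 0 := by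
  simp only [descentsBefore, Finset.card_filter, Finset.sum_Ico_succ_top hs]

lemma descentsBefore_le {Q : ℕ → ℕ} (hQ : StrictMonoOn (fun s => toLex (Q s, ρ s)) (Set.Icc 1 n))
    {s : ℕ} (hs : s ∈ Set.Icc 1 n) : descentsBefore ρ s ≤ Q s := by
  obtain ⟨h1s, hsn⟩ := hs
  induction s, h1s using Nat.le_induction with
  | base => simp [descentsBefore]
  | succ s h1s ih =>
    have step := Prod.Lex.toLex_lt_toLex.1
      (hQ ⟨h1s, by omega⟩ ⟨by omega, hsn⟩ (Nat.lt_add_one s))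
    have := ih (by omega)
    rw [descentsBefore_succ ρ h1s]
    grind

lemma strictMonoOn_descentsBefore (hρ : Set.InjOn ρ (Set.Icc 1 n)) :
    StrictMonoOn (fun s => toLex (descentsBefore ρ s, ρ s)) (Set.Icc 1 n) := by
  refine strictMonoOn_of_lt_add_one Set.ordConnected_Icc fun s _ hs hs' => ?_
  have ne : ρ s ≠ ρ (s + 1) := hρ.ne hs hs' (by omega)
  rw [Prod.Lex.toLex_lt_toLex, descentsBefore_succ ρ hs.1]
  grind

lemma exists_label_strictMonoOn_iff {M : ℕ} (hn : 1 ≤ n) (hρ : Set.InjOn ρ (Set.Icc 1 n)) :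
    (∃ Q : ℕ → ℕ, (∀ s ∈ Finset.Icc 1 n, Q s < M) ∧
      StrictMonoOn (fun s => toLex (Q s, ρ s)) (Set.Icc 1 n)) ↔ 1 + descentsBefore ρ n ≤ M := by
  constructor
  · rintro ⟨Q, hQM, hQ⟩
    have := descentsBefore_le hQ ⟨hn, le_rfl⟩
    have := hQM n (by simpa using hn)
    omega
  · intro hM
    refine ⟨descentsBefore ρ, fun s hs => ?_, strictMonoOn_descentsBefore hρ⟩
    have := descentsBefore_mono ρ (Finset.mem_Icc.1 hs).2
    omega

lemma Icc_one_sub_one_eq_Ico (n : ℕ) : Finset.Icc 1 (n - 1) = Finset.Ico 1 n := by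
  grind

lemma ascRuns_eq_descentsBefore (n : ℕ) (σ : ℕ → ℕ) {T : ℕ} (hT : Even T) :
    ascRuns n σ = 1 + descentsBefore (fun s => (-1 : ℤ) ^ T * σ s) n := by
  simp [ascRuns, descents, descentsBefore, hT.neg_one_pow, Icc_one_sub_one_eq_Ico n]

lemma descRuns_eq_descentsBefore (n : ℕ) (σ : ℕ → ℕ) {T : ℕ} (hT : Odd T) :
    descRuns n σ = 1 + descentsBefore (fun s => (-1 : ℤ) ^ T * σ s) n := by
  simp [descRuns, ascents, descentsBefore, hT.neg_one_pow, Icc_one_sub_one_eq_Ico n]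

lemma runs_le_iff_descentsBefore (n T M : ℕ) (σ : ℕ → ℕ) :
    (Even T ∧ ascRuns n σ ≤ M ∨ Odd T ∧ descRuns n σ ≤ M) ↔
      1 + descentsBefore (fun s => (-1 : ℤ) ^ T * σ s) n ≤ M := by
  rcases Nat.even_or_odd T with hT | hT
  · simp [hT, Nat.not_odd_iff_even.2 hT, ascRuns_eq_descentsBefore n σ hT]
  · simp [hT, Nat.not_even_iff_odd.2 hT, descRuns_eq_descentsBefore n σ hT]

end Descents

theorem stmt_17 (n T : ℕ) (hn : 1 ≤ n) (hT : 1 ≤ T)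
    (m : ℕ → ℕ) (hm : ∀ t ∈ Finset.Icc 1 T, 1 ≤ m t)
    (σ : ℕ → ℕ) (hσ : Set.BijOn σ (Set.Icc 1 n) (Set.Icc 1 n)) :
    (∃ (P : ℕ → ℕ → ℕ) (σs : ℕ → ℕ → ℕ),
      σs 0 = σ ∧
      (∀ t ∈ Finset.Icc 1 T,
        Set.BijOn (σs t) (Set.Icc 1 n) (Set.Icc 1 n)) ∧
      (∀ t ∈ Finset.Icc 1 T, ∀ s ∈ Finset.Icc 1 n, P t s < m t) ∧
      (∀ t ∈ Finset.Icc 1 T, SShuffle n (P t) (σs (t - 1)) (σs t)) ∧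
      (∀ s ∈ Finset.Icc 1 n, σs T s = s)) ↔
    ((Even T ∧ ascRuns n σ ≤ ∏ t ∈ Finset.Icc 1 T, m t) ∨
     (Odd T ∧ descRuns n σ ≤ ∏ t ∈ Finset.Icc 1 T, m t)) := by
  rw [runs_le_iff_descentsBefore,
    ← exists_label_strictMonoOn_iff hn (injOn_neg_one_pow_mul hσ.injOn T)]
  simpa only [← sameOrderOn_id_iff_strictMonoOn, Finset.coe_Icc, id_eq] using
    exists_sShuffle_rounds_iff_exists_label hσ (Set.bijOn_id _)
end

section
/- Let n ≥ 1 and T ≥ 1, let m_1, …, m_T ≥ 1, and for each t ∈ [T] let c_t : {0,…,m_t−1} → {0,1} be a type indicator and P_t : [n] → {0,…,m_t−1} a pile assignment. Let σ_0 = σ be a permutation of [n] and σ_1, …, σ_T permutations of [n] with Shuffle(c_t, P_t, σ_{t−1}) = σ_t for each t ∈ [T]. For y ∈ {0,…,m−1} define rev_m(y) = m − 1 − y, and rev_m^0 = id, rev_m^1 = rev_m. Define for each s ∈ [n]: the suffix parities f_{T+1}(s) = 0 and f_t(s) = (Σ_{t'=t}^{T} c_{t'}(P_{t'}(s))) mod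 2; the design piles d_t(s) = rev_{m_t}^{f_{t+1}(s)}(P_t(s)); and the virtual assignment P̂_T(s) = d_T(s), P̂_t(s) = d_t(s) + m_t · P̂_{t+1}(s) for 1 ≤ t ≤ T−1. Let m̂_t = ∏_{t'=t}^{T} m_{t'}, and define virtual type indicators ĉ_t : {0,…,m̂_t−1} → {0,1} by ĉ_T = c_T, and for 1 ≤ t ≤ T−1, for all d ∈ {0,…,m_t−1} and q ∈ {0,…,m̂_{t+1}−1}: ĉ_t(d + m_t·q) = (c_t(rev_{m_t}^{ĉ_{t+1}(q)}(d)) + ĉ_{t+1}(q)) mod 2. Then Shuffle(ĉ_1, P̂_1, σ) = σ_T. -/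
/-!
Two consecutive pile shuffles amount to one. The later round dominates the order of the cards; two
cards sharing a pile `q` in the later round are compared by the earlier round, in reversed order
when `q` is a stack. Hence the composite pile is the pair (later pile, earlier pile) ordered
lexicographically, with the earlier pile index reversed when `q` is a stack, and the composite type
is the sum of the two types modulo 2. Encoding the pair as `d + m * q` preserves the lexicographic
order because `d < m`.

Composing the rounds from the last one backwards gives the virtual shuffle: the virtual type
`ĉ_t (P̂_t s)` is the suffix parity `f_t s`, so reversing by `f_{t+1} s`, as the design piles do, is
the reversal that composing round `t` with the virtual shuffle of the rounds after it asks for.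
-/

/-- `Shuffle(c, P, σ) = σ'`: the heterogeneous pile shuffle with type
indicator `c` and pile assignments `P` transforms `σ` into `σ'`: for all
`s, t ∈ [n]`, `σ' s < σ' t` iff `P s < P t`, or `P s = P t` and
(`σ s < σ t` when `c (P s) = 0`, respectively `σ s > σ t` when `c (P s) = 1`). -/
def HeteroShuffle (n : ℕ) (c : ℕ → Fin 2) (P σ σ' : ℕ → ℕ) : Prop :=
  ∀ s ∈ Finset.Icc 1 n, ∀ t ∈ Finset.Icc 1 n,
    (σ' s < σ' t ↔ P s < P t ∨ (P s = P t ∧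
      (if c (P s) = 0 then σ s < σ t else σ t < σ s)))

/-- `revIter m k y` is `rev_m^k(y)` where `rev_m(y) = m − 1 − y` reverses
`{0, …, m−1}`: the identity for `k = 0` and `rev_m` for `k = 1`. -/
def revIter (m : ℕ) (k : Fin 2) (y : ℕ) : ℕ :=
  if k = 0 then y else m - 1 - y

open Finset

section Reversal

variable {m a b : ℕ}

theorem revIter_zero (m y : ℕ) : revIter m 0 y = y := rfl

theorem revIter_lt (k : Fin 2) (ha : a < m) : revIter m k a < m := by
  unfold revIter
  split_ifs <;> omega

theorem revIter_revIter (k : Fin 2) (ha : a < m) : revIter m k (revIter m k a) = a := by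
  unfold revIter
  split_ifs <;> omega

theorem revIter_inj (k : Fin 2) (ha : a < m) (hb : b < m) :
    revIter m k a = revIter m k b ↔ a = b := by
  refine ⟨fun h => ?_, fun h => h ▸ rfl⟩
  rw [← revIter_revIter k ha, h, revIter_revIter k hb]

theorem revIter_lt_revIter_iff (k : Fin 2) (ha : a < m) (hb : b < m) :
    revIter m k a < revIter m k b ↔ if k = 0 then a < b else b < a := by
  unfold revIter
  split_ifs <;> omega

end Reversal

theorem ite_add_eq_zero {α : Sort*} (j k : Fin 2) (x y : α) :
    (if j + k = 0 then x else y) =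
      if k = 0 then (if j = 0 then x else y) else (if j = 0 then y else x) := by
  fin_cases j <;> fin_cases k <;> rfl

section MixedRadix

variable {m a b p q : ℕ}

theorem add_mul_lt_mul_of_lt (ha : a < m) (hpq : p < q) : a + m * p < m * q :=
  calc a + m * p < m + m * p := by gcongr
    _ = m * (p + 1) := by ring
    _ ≤ m * q := by gcongr; exact hpq

theorem add_mul_lt_add_mul_iff (ha : a < m) (hb : b < m) :
    a + m * p < b + m * q ↔ p < q ∨ (p = q ∧ a < b) := by
  rcases lt_trichotomy p q with hpq | rfl | hqp
  · have := add_mul_lt_mul_of_lt ha hpq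
    omega
  · simp
  · have := add_mul_lt_mul_of_lt hb hqp
    omega

theorem add_mul_eq_add_mul_iff (ha : a < m) (hb : b < m) :
    a + m * p = b + m * q ↔ p = q ∧ a = b := by
  have hlt := add_mul_lt_add_mul_iff (p := p) (q := q) ha hb
  have hgt := add_mul_lt_add_mul_iff (p := q) (q := p) hb ha
  refine ⟨fun h => by omega, ?_⟩
  rintro ⟨rfl, rfl⟩
  rfl

theorem mixedRadix_lt_prod {l T : ℕ} {m d x : ℕ → ℕ} (hd : ∀ t ∈ Ico l T, d t < m t)
    (hxT : x T < m T) (hx : ∀ t ∈ Ico l T, x t = d t + m t * x (t + 1)) :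
    ∀ t ∈ Icc l T, x t < ∏ i ∈ Icc t T, m i := by
  intro t ht
  obtain ⟨hlt, htT⟩ := mem_Icc.1 ht
  refine Nat.decreasingInduction' (P := fun t => x t < ∏ i ∈ Icc t T, m i)
    (fun k hkT htk ih => ?_) htT ?_
  · have hk : k ∈ Ico l T := mem_Ico.2 ⟨hlt.trans htk, hkT⟩
    rw [hx k hk, ← mul_prod_Ioc_eq_prod_Icc hkT.le, ← Icc_add_one_left_eq_Ioc]
    exact add_mul_lt_mul_of_lt (hd k hk) ih
  · rwa [Icc_self, prod_singleton]

end MixedRadix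

namespace HeteroShuffle

variable {n : ℕ}

theorem congr {c c' : ℕ → Fin 2} {P P' σ σ' : ℕ → ℕ} (h : HeteroShuffle n c P σ σ')
    (hP : ∀ s ∈ Icc 1 n, P' s = P s) (hc : ∀ s ∈ Icc 1 n, c' (P s) = c (P s)) :
    HeteroShuffle n c' P' σ σ' := by
  intro s hs t ht
  rw [hP s hs, hP t ht, hc s hs]
  exact h s hs t ht

theorem comp {m : ℕ} {c C C' : ℕ → Fin 2} {P Q Q' σ₀ σ₁ σ₂ : ℕ → ℕ}
    (h₁ : HeteroShuffle n c P σ₀ σ₁) (h₂ : HeteroShuffle n C Q σ₁ σ₂)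
    (hP : ∀ s ∈ Icc 1 n, P s < m)
    (hQ' : ∀ s ∈ Icc 1 n, Q' s = revIter m (C (Q s)) (P s) + m * Q s)
    (hC' : ∀ s ∈ Icc 1 n, C' (Q' s) = c (P s) + C (Q s)) :
    HeteroShuffle n C' Q' σ₀ σ₂ := by
  intro s hs t ht
  have hPs := hP s hs
  have hPt := hP t ht
  rw [h₂ s hs t ht, hC' s hs, hQ' s hs, hQ' t ht,
    add_mul_lt_add_mul_iff (revIter_lt _ hPs) (revIter_lt _ hPt),
    add_mul_eq_add_mul_iff (revIter_lt _ hPs) (revIter_lt _ hPt)]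
  by_cases hQ : Q s = Q t
  · rw [← hQ, revIter_lt_revIter_iff _ hPs hPt, revIter_inj _ hPs hPt, ite_add_eq_zero,
      h₁ s hs t ht, h₁ t ht s hs]
    by_cases hPst : P s = P t
    · simp [hPst]
    · simp [hPst, Ne.symm hPst]
  · simp [hQ]

theorem of_rounds {l T : ℕ} {m : ℕ → ℕ} {c chat : ℕ → ℕ → Fin 2} {P Phat σs : ℕ → ℕ → ℕ}
    (hrounds : ∀ t ∈ Icc l T, HeteroShuffle n (c t) (P t) (σs (t - 1)) (σs t))
    (hP : ∀ t ∈ Icc l T, ∀ s ∈ Icc 1 n, P t s < m t)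
    (hPhatT : ∀ s ∈ Icc 1 n, Phat T s = P T s)
    (hPhat : ∀ t ∈ Ico l T, ∀ s ∈ Icc 1 n, Phat t s =
      revIter (m t) (chat (t + 1) (Phat (t + 1) s)) (P t s) + m t * Phat (t + 1) s)
    (hchatT : ∀ s ∈ Icc 1 n, chat T (P T s) = c T (P T s))
    (hchat : ∀ t ∈ Ico l T, ∀ s ∈ Icc 1 n,
      chat t (Phat t s) = c t (P t s) + chat (t + 1) (Phat (t + 1) s)) :
    ∀ t ∈ Icc l T, HeteroShuffle n (chat t) (Phat t) (σs (t - 1)) (σs T) := by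
  intro t ht
  obtain ⟨hlt, htT⟩ := mem_Icc.1 ht
  refine Nat.decreasingInduction'
    (P := fun t => HeteroShuffle n (chat t) (Phat t) (σs (t - 1)) (σs T))
    (fun k hkT htk ih => ?_) htT ?_
  · have hk : k ∈ Ico l T := mem_Ico.2 ⟨hlt.trans htk, hkT⟩
    have hk' : k ∈ Icc l T := Ico_subset_Icc_self hk
    exact (hrounds k hk').comp ih (hP k hk') (hPhat k hk) (hchat k hk)
  · exact (hrounds T (mem_Icc.2 ⟨hlt.trans htT, le_rfl⟩)).congr hPhatT hchatT

end HeteroShuffle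

theorem virtualType_eq_suffixParity {l T : ℕ} {m p x : ℕ → ℕ} {f : ℕ → Fin 2}
    {c chat : ℕ → ℕ → Fin 2} (hp : ∀ t ∈ Icc l T, p t < m t)
    (hfT : f T = c T (p T)) (hf : ∀ t ∈ Ico l T, f t = c t (p t) + f (t + 1))
    (hxT : x T = p T) (hx : ∀ t ∈ Ico l T, x t = revIter (m t) (f (t + 1)) (p t) + m t * x (t + 1))
    (hchatT : ∀ q < m T, chat T q = c T q)
    (hchat : ∀ t ∈ Ico l T, ∀ r < m t, ∀ q < ∏ i ∈ Icc (t + 1) T, m i,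
      chat t (r + m t * q) = c t (revIter (m t) (chat (t + 1) q) r) + chat (t + 1) q) :
    ∀ t ∈ Icc l T, chat t (x t) = f t := by
  intro t ht
  obtain ⟨hlt, htT⟩ := mem_Icc.1 ht
  have hpT : p T < m T := hp T (mem_Icc.2 ⟨hlt.trans htT, le_rfl⟩)
  have hx_lt : ∀ t ∈ Icc l T, x t < ∏ i ∈ Icc t T, m i :=
    mixedRadix_lt_prod (fun t ht => revIter_lt _ (hp t (Ico_subset_Icc_self ht)))
      (hxT ▸ hpT) hx
  refine Nat.decreasingInduction' (P := fun t => chat t (x t) = f t) (fun k hkT htk ih => ?_) htT ?_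
  · have hk : k ∈ Ico l T := mem_Ico.2 ⟨hlt.trans htk, hkT⟩
    have hpk : p k < m k := hp k (Ico_subset_Icc_self hk)
    have hx_succ : x (k + 1) < ∏ i ∈ Icc (k + 1) T, m i :=
      hx_lt (k + 1) (mem_Icc.2 ⟨by omega, hkT⟩)
    calc chat k (x k)
        = c k (revIter (m k) (f (k + 1)) (revIter (m k) (f (k + 1)) (p k))) + f (k + 1) := by
          rw [hx k hk, hchat k hk _ (revIter_lt _ hpk) _ hx_succ, ih]
      _ = f k := by rw [revIter_revIter _ hpk, hf k hk]
  · rw [hxT, hchatT _ hpT, hfT]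

theorem stmt_18_general {n T : ℕ} {m : ℕ → ℕ} {c : ℕ → ℕ → Fin 2} {P : ℕ → ℕ → ℕ}
    (hP : ∀ t ∈ Icc 1 T, ∀ s ∈ Icc 1 n, P t s < m t) {σs : ℕ → ℕ → ℕ}
    (hrounds : ∀ t ∈ Icc 1 T, HeteroShuffle n (c t) (P t) (σs (t - 1)) (σs t))
    {f : ℕ → ℕ → Fin 2} (hfT1 : ∀ s, f (T + 1) s = 0)
    (hf : ∀ t ∈ Icc 1 T, ∀ s, f t s = ∑ t' ∈ Icc t T, c t' (P t' s))
    {d : ℕ → ℕ → ℕ} (hd : ∀ t ∈ Icc 1 T, ∀ s, d t s = revIter (m t) (f (t + 1) s) (P t s))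
    {Phat : ℕ → ℕ → ℕ} (hPhatT : ∀ s, Phat T s = d T s)
    (hPhatRec : ∀ t ∈ Icc 1 (T - 1), ∀ s, Phat t s = d t s + m t * Phat (t + 1) s)
    {mhat : ℕ → ℕ} (hmhat : ∀ t, mhat t = ∏ t' ∈ Icc t T, m t')
    {chat : ℕ → ℕ → Fin 2} (hchatT : ∀ q < m T, chat T q = c T q)
    (hchatRec : ∀ t ∈ Icc 1 (T - 1), ∀ dd < m t, ∀ q < mhat (t + 1),
      chat t (dd + m t * q) =
        c t (revIter (m t) (chat (t + 1) q) dd) + chat (t + 1) q) :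
    ∀ t ∈ Icc 1 T, HeteroShuffle n (chat t) (Phat t) (σs (t - 1)) (σs T) := by
  intro t ht
  have hT : T ∈ Icc 1 T := right_mem_Icc.2 ((mem_Icc.1 ht).1.trans (mem_Icc.1 ht).2)
  have hIco : ∀ k ∈ Ico 1 T, k ∈ Icc 1 (T - 1) ∧ k ∈ Icc 1 T ∧ k + 1 ∈ Icc 1 T := by
    intro k hk
    simp only [mem_Ico, mem_Icc] at hk ⊢
    omega
  have hfT : ∀ s, f T s = c T (P T s) := fun s => by rw [hf T hT, Icc_self, sum_singleton]
  have hf_succ : ∀ k ∈ Ico 1 T, ∀ s, f k s = c k (P k s) + f (k + 1) s := fun k hk s => by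
    rw [hf k (hIco k hk).2.1, hf (k + 1) (hIco k hk).2.2, Icc_add_one_left_eq_Ioc,
      ← add_sum_Ioc_eq_sum_Icc (mem_Ico.1 hk).2.le]
  have hPT : ∀ s, Phat T s = P T s := fun s => by rw [hPhatT, hd T hT, hfT1, revIter_zero]
  have hPhat : ∀ k ∈ Ico 1 T, ∀ s,
      Phat k s = revIter (m k) (f (k + 1) s) (P k s) + m k * Phat (k + 1) s := fun k hk s => by
    rw [hPhatRec k (hIco k hk).1, hd k (hIco k hk).2.1]
  have hparity : ∀ s ∈ Icc 1 n, ∀ k ∈ Icc 1 T, chat k (Phat k s) = f k s := fun s hs =>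
    virtualType_eq_suffixParity (f := fun k => f k s) (x := fun k => Phat k s)
      (fun k hk => hP k hk s hs) (hfT s) (fun k hk => hf_succ k hk s) (hPT s)
      (fun k hk => hPhat k hk s) hchatT
      (fun k hk => by simpa only [hmhat] using hchatRec k (hIco k hk).1)
  refine HeteroShuffle.of_rounds hrounds hP (fun s _ => hPT s) (fun k hk s hs => ?_)
    (fun s hs => hchatT _ (hP T hT s hs)) (fun k hk s hs => ?_) t ht
  · rw [hparity s hs (k + 1) (hIco k hk).2.2, hPhat k hk]
  · rw [hparity s hs k (hIco k hk).2.1, hparity s hs (k + 1) (hIco k hk).2.2, hf_succ k hk]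

theorem stmt_18 (n T : ℕ) (hn : 1 ≤ n) (hT : 1 ≤ T)
    (m : ℕ → ℕ) (hm : ∀ t ∈ Finset.Icc 1 T, 1 ≤ m t)
    -- per-round type indicators and pile assignments
    (c : ℕ → ℕ → Fin 2) (P : ℕ → ℕ → ℕ)
    (hP : ∀ t ∈ Finset.Icc 1 T, ∀ s ∈ Finset.Icc 1 n, P t s < m t)
    (σ : ℕ → ℕ) (hσ : Set.BijOn σ (Set.Icc 1 n) (Set.Icc 1 n))
    (σs : ℕ → ℕ → ℕ) (hσ0 : σs 0 = σ)
    (hσsbij : ∀ t ∈ Finset.Icc 1 T,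
      Set.BijOn (σs t) (Set.Icc 1 n) (Set.Icc 1 n))
    (hrounds : ∀ t ∈ Finset.Icc 1 T,
      HeteroShuffle n (c t) (P t) (σs (t - 1)) (σs t))
    -- suffix parities `f_t(s) = (Σ_{t'=t}^{T} c_{t'}(P_{t'}(s))) mod 2`
    (f : ℕ → ℕ → Fin 2)
    (hfT1 : ∀ s, f (T + 1) s = 0)
    (hf : ∀ t ∈ Finset.Icc 1 T, ∀ s,
      f t s = ∑ t' ∈ Finset.Icc t T, c t' (P t' s))
    -- design piles `d_t(s) = rev_{m_t}^{f_{t+1}(s)}(P_t(s))`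
    (d : ℕ → ℕ → ℕ)
    (hd : ∀ t ∈ Finset.Icc 1 T, ∀ s,
      d t s = revIter (m t) (f (t + 1) s) (P t s))
    -- virtual pile assignments `P̂`
    (Phat : ℕ → ℕ → ℕ)
    (hPhatT : ∀ s, Phat T s = d T s)
    (hPhatRec : ∀ t ∈ Finset.Icc 1 (T - 1), ∀ s,
      Phat t s = d t s + m t * Phat (t + 1) s)
    -- virtual pile counts `m̂_t = ∏_{t'=t}^{T} m_{t'}`
    (mhat : ℕ → ℕ)
    (hmhat : ∀ t, mhat t = ∏ t' ∈ Finset.Icc t T, m t')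
    -- virtual type indicators `ĉ`
    (chat : ℕ → ℕ → Fin 2)
    (hchatT : ∀ q < m T, chat T q = c T q)
    (hchatRec : ∀ t ∈ Finset.Icc 1 (T - 1), ∀ dd < m t, ∀ q < mhat (t + 1),
      chat t (dd + m t * q) =
        c t (revIter (m t) (chat (t + 1) q) dd) + chat (t + 1) q) :
    HeteroShuffle n (chat 1) (Phat 1) σ (σs T) :=
  hσ0 ▸ stmt_18_general hP hrounds hfT1 hf hd hPhatT hPhatRec hmhat hchatT hchatRec 1
    (mem_Icc.2 ⟨le_rfl, hT⟩)
end
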